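/- arXiv:1308.6390 — 2 statements merged into one kernel-verified Lean document; each statement's English description precedes it below -/
import Mathlib

section
/- Let l, r be projective partitions (on a and b points respectively) and h a (t(l), t(r))-mixing partition; set l ∗_h r = (l_u* ⊗ r_u*) h̃ (l_u ⊗ r_u) where h̃ fills h with identities appropriately. Then: (1) if l ∗_h r belongs to a category of partitions C, then l and r belong to C; (2) the assignment (l, r, h) ↦ l ∗_h r is injective; (3) l ∗_h r ⪯ l ⊗ r. -/
/-- A two-row partition with `k` upper and `l` lower points, encoded as the
equivalence relation whose classes are the blocks. -/
abbrev PP (k l : ℕ) := Setoid (Fin k ⊕ Fin l)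

/-- The involution `p*` (turning `p` upside down). -/
def swapP {k l : ℕ} (p : PP k l) : PP l k := Setoid.comap Sum.swap p

/-- Disjoint union of two setoids. -/
def sumSetoid {α β : Type*} (s : Setoid α) (t : Setoid β) : Setoid (α ⊕ β) where
  r := Sum.LiftRel s.r t.r
  iseqv := by
    refine ⟨fun x => ?_, fun {x y} h => ?_, fun {x y z} h1 h2 => ?_⟩
    · cases x with
      | inl a => exact Sum.LiftRel.inl (s.iseqv.refl a)
      | inr b => exact Sum.LiftRel.inr (t.iseqv.refl b)
    · cases h with
      | inl h => exact Sum.LiftRel.inl (s.iseqv.symm h)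
      | inr h => exact Sum.LiftRel.inr (t.iseqv.symm h)
    · cases h1 with
      | inl h1 =>
        cases h2 with
        | inl h2 => exact Sum.LiftRel.inl (s.iseqv.trans h1 h2)
      | inr h1 =>
        cases h2 with
        | inr h2 => exact Sum.LiftRel.inr (t.iseqv.trans h1 h2)

/-- Reindexing equivalence for the horizontal concatenation (tensor product). -/
def tensorEquiv (k l k' l' : ℕ) :
    (Fin (k + k') ⊕ Fin (l + l')) ≃ ((Fin k ⊕ Fin l) ⊕ (Fin k' ⊕ Fin l')) :=
  (Equiv.sumCongr finSumFinEquiv.symm finSumFinEquiv.symm).trans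
    (Equiv.sumSumSumComm (Fin k) (Fin k') (Fin l) (Fin l'))

/-- Tensor product (horizontal concatenation) of partitions. -/
def tensorP {k l k' l' : ℕ} (p : PP k l) (q : PP k' l') : PP (k + k') (l + l') :=
  Setoid.comap (tensorEquiv k l k' l') (sumSetoid p q)

/-- The relation on `k ⊔ l ⊔ m` points generated by `p` (upper part) and `q` (lower part). -/
def midRel {k l m : ℕ} (p : PP k l) (q : PP l m) :
    (Fin k ⊕ (Fin l ⊕ Fin m)) → (Fin k ⊕ (Fin l ⊕ Fin m)) → Prop := fun x y =>
  (∃ a b : Fin k ⊕ Fin l, p.r a b ∧ x = Sum.map id Sum.inl a ∧ y = Sum.map id Sum.inl b) ∨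
  (∃ a b : Fin l ⊕ Fin m, q.r a b ∧ x = Sum.inr a ∧ y = Sum.inr b)

/-- The equivalence relation generated on `k ⊔ l ⊔ m` in the composition procedure. -/
def bigS {k l m : ℕ} (p : PP k l) (q : PP l m) : Setoid (Fin k ⊕ (Fin l ⊕ Fin m)) :=
  Relation.EqvGen.setoid (midRel p q)

/-- `compP q p` is the vertical composition `qp` (apply `p : P(k,l)` first, then `q : P(l,m)`). -/
def compP {k l m : ℕ} (q : PP l m) (p : PP k l) : PP k m :=
  Setoid.comap (Sum.map id Sum.inr) (bigS p q)

/-- `rlP q p` : the number of closed loops removed in the composition `qp`,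
i.e. the blocks of the generated relation consisting only of middle points. -/
noncomputable def rlP {k l m : ℕ} (q : PP l m) (p : PP k l) : ℕ :=
  Nat.card {c : Quotient (bigS p q) //
    ∀ x, Quotient.mk (bigS p q) x = c → ∃ b : Fin l, x = Sum.inr (Sum.inl b)}

/-- `b(p)` : number of blocks. -/
noncomputable def bP {k l : ℕ} (p : PP k l) : ℕ := Nat.card (Quotient p)

/-- `t(p)` : number of through-blocks (blocks meeting both rows). -/
noncomputable def tP {k l : ℕ} (p : PP k l) : ℕ :=
  Nat.card {c : Quotient p // (∃ a : Fin k, Quotient.mk p (Sum.inl a) = c) ∧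
    (∃ b : Fin l, Quotient.mk p (Sum.inr b) = c)}

/-- `β(p) = b(p) - t(p)` : number of non-through-blocks. -/
noncomputable def betaP {k l : ℕ} (p : PP k l) : ℕ := bP p - tP p

/-- The identity partition `|^{⊗k}`. -/
def idP (k : ℕ) : PP k k := Setoid.ker (Sum.elim (fun i : Fin k => i) (fun i : Fin k => i))

/-- A pair partition: all blocks have size two. -/
def isPair {k l : ℕ} (p : PP k l) : Prop := ∀ x, Nat.card {y // p.r x y} = 2

/-- A through-partition: a pair partition each of whose blocks connects exactly one
upper point to exactly one lower point. -/
def isThrough {k : ℕ} (p : PP k k) : Prop :=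
  isPair p ∧ (∀ a b : Fin k, p.r (Sum.inl a) (Sum.inl b) → a = b) ∧
    (∀ a b : Fin k, p.r (Sum.inr a) (Sum.inr b) → a = b)

/-- A building partition. -/
def isBuilding {k l : ℕ} (p : PP k l) : Prop :=
  (∀ b b' : Fin l, p.r (Sum.inr b) (Sum.inr b') → b = b') ∧
  (∀ b : Fin l, ∃ a : Fin k, p.r (Sum.inl a) (Sum.inr b)) ∧
  (∀ b b' : Fin l, ∀ a a' : Fin k, b < b' →
    IsLeast {x : Fin k | p.r (Sum.inl x) (Sum.inr b)} a →
    IsLeast {x : Fin k | p.r (Sum.inl x) (Sum.inr b')} a' → a < a')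

/-- A projective partition: symmetric and idempotent. -/
def isProjective {k : ℕ} (p : PP k k) : Prop := swapP p = p ∧ compP p p = p

/-- Linear position of the points, reading the upper row left to right and then the
lower row right to left. -/
def posP (k l : ℕ) : Fin k ⊕ Fin l → ℕ :=
  Sum.elim (fun i => (i : ℕ)) (fun j => k + (l - 1 - (j : ℕ)))

/-- Noncrossing partitions. -/
def isNC {k l : ℕ} (p : PP k l) : Prop :=
  ¬ ∃ x1 x2 x3 x4 : Fin k ⊕ Fin l,
    posP k l x1 < posP k l x2 ∧ posP k l x2 < posP k l x3 ∧ posP k l x3 < posP k l x4 ∧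
    p.r x1 x3 ∧ p.r x2 x4 ∧ ¬ p.r x1 x2

/-- Rotation of the leftmost upper point to the lower-left position: reindexing equivalence. -/
def rotEquivL (k l : ℕ) : (Fin k ⊕ Fin (l + 1)) ≃ (Fin (k + 1) ⊕ Fin l) :=
  (Equiv.sumCongr (Equiv.refl (Fin k))
      ((finCongr (Nat.add_comm l 1)).trans finSumFinEquiv.symm)).trans <|
    ((Equiv.sumAssoc (Fin k) (Fin 1) (Fin l)).symm).trans <|
      (Equiv.sumCongr (Equiv.sumComm (Fin k) (Fin 1)) (Equiv.refl (Fin l))).trans <|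
        (Equiv.sumCongr finSumFinEquiv (Equiv.refl (Fin l))).trans
          (Equiv.sumCongr (finCongr (Nat.add_comm 1 k)) (Equiv.refl (Fin l)))

/-- Rotation of the rightmost upper point to the lower-right position: reindexing equivalence. -/
def rotEquivR (k l : ℕ) : (Fin k ⊕ Fin (l + 1)) ≃ (Fin (k + 1) ⊕ Fin l) :=
  (Equiv.sumCongr (Equiv.refl (Fin k)) finSumFinEquiv.symm).trans <|
    (Equiv.sumCongr (Equiv.refl (Fin k)) (Equiv.sumComm (Fin l) (Fin 1))).trans <|
      ((Equiv.sumAssoc (Fin k) (Fin 1) (Fin l)).symm).trans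
        (Equiv.sumCongr finSumFinEquiv (Equiv.refl (Fin l)))

/-- A category of partitions: contains the identity partition and is closed under
tensor products, composition, involution and rotations. -/
structure PartitionCategory where
  mem : ∀ k l : ℕ, Set (PP k l)
  id_mem : idP 1 ∈ mem 1 1
  tensor_mem : ∀ {k l k' l' : ℕ} (p : PP k l) (q : PP k' l'),
    p ∈ mem k l → q ∈ mem k' l' → tensorP p q ∈ mem (k + k') (l + l')
  comp_mem : ∀ {k l m : ℕ} (q : PP l m) (p : PP k l),
    q ∈ mem l m → p ∈ mem k l → compP q p ∈ mem k m
  swap_mem : ∀ {k l : ℕ} (p : PP k l), p ∈ mem k l → swapP p ∈ mem l k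
  rotL_mem : ∀ {k l : ℕ} (p : PP (k + 1) l),
    p ∈ mem (k + 1) l → Setoid.comap (rotEquivL k l) p ∈ mem k (l + 1)
  rotL_mem' : ∀ {k l : ℕ} (p : PP k (l + 1)),
    p ∈ mem k (l + 1) → Setoid.comap (rotEquivL k l).symm p ∈ mem (k + 1) l
  rotR_mem : ∀ {k l : ℕ} (p : PP (k + 1) l),
    p ∈ mem (k + 1) l → Setoid.comap (rotEquivR k l) p ∈ mem k (l + 1)
  rotR_mem' : ∀ {k l : ℕ} (p : PP k (l + 1)),
    p ∈ mem k (l + 1) → Setoid.comap (rotEquivR k l).symm p ∈ mem (k + 1) l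

/-- The pair partition `r_σ` associated to a permutation `σ`, connecting the `i`-th
upper point to the `σ(i)`-th lower point. -/
def permP {m : ℕ} (σ : Equiv.Perm (Fin m)) : PP m m :=
  Setoid.ker (Sum.elim (fun i => σ i) (fun i : Fin m => i))

/-- The size of the block of `p` containing the point `x`. -/
noncomputable def blockSize {k l : ℕ} (p : PP k l) (x : Fin k ⊕ Fin l) : ℕ :=
  Nat.card {y // p.r x y}

/-- A `(k,l)`-mixing partition: a projective partition on `k+l` (doubled) points all of
whose blocks have size 2 or 4, with the prescribed forms. -/
def isMixing (k l : ℕ) (h : PP (k + l) (k + l)) : Prop :=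
  isProjective h ∧
  (∀ x, blockSize h x = 2 ∨ blockSize h x = 4) ∧
  (∀ x y, h.r x y → x ≠ y → blockSize h x = 2 →
    (∃ a : Fin (k + l), (x = Sum.inl a ∧ y = Sum.inr a) ∨ (x = Sum.inr a ∧ y = Sum.inl a)) ∨
    (∃ a b : Fin (k + l), (a : ℕ) < k ∧ k ≤ (b : ℕ) ∧
      ((x = Sum.inl a ∧ y = Sum.inl b) ∨ (x = Sum.inl b ∧ y = Sum.inl a) ∨
       (x = Sum.inr a ∧ y = Sum.inr b) ∨ (x = Sum.inr b ∧ y = Sum.inr a)))) ∧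
  (∀ x, blockSize h x = 4 → ∃ a b : Fin (k + l), (a : ℕ) < k ∧ k ≤ (b : ℕ) ∧
    ∀ y, h.r x y ↔ (y = Sum.inl a ∨ y = Sum.inr a ∨ y = Sum.inl b ∨ y = Sum.inr b))

/-- The partition `l ∗_h r = (l_u* ⊗ r_u*) h (l_u ⊗ r_u)` mixing the through-block
structures of two projective partitions along `h`. -/
def mixP {a b ta tb : ℕ} (lu : PP a ta) (ru : PP b tb) (h : PP (ta + tb) (ta + tb)) :
    PP (a + b) (a + b) :=
  compP (tensorP (swapP lu) (swapP ru)) (compP h (tensorP lu ru))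

/-!
If `U U* = 1`, choose an upper point in the block of each lower point of `U`. In terms of this
transversal, `U* h U` is the join of a partition that depends only on `U` with the image of `h`.
Hence `h` is the restriction of `U* h U` to the transversal, and `U* U · U* h U = U* h U`. For
`U = l_u ⊗ r_u` the former recovers `h` from `l ∗_h r`, and the latter is `l ∗_h r ⪯ l ⊗ r`.

Closing up the strands of `l ∗_h r` that belong to `r` amounts to closing up the corresponding
strands of `h`. Since a block of `h` meets at most one strand of each leg, this leaves the identity,
so that `l_u* l_u = l` remains. A category is closed under partial traces: closing up an outermost
strand of `p` amounts to composing a rotation of `p` with a rotated identity partition. Finally `l`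
determines `l_u`, whose least representatives of the lower points are the least elements of the
through-blocks of `l`, in increasing order.
-/

section Setoid

variable {α β γ : Type*}

theorem gc_setoidMap_comap (f : α → β) :
    GaloisConnection (fun s : Setoid α => s.map f) (Setoid.comap f) := by
  refine fun s t => ⟨fun h => Setoid.le_comap_map.trans fun _ _ hxy => h hxy, fun h => ?_⟩
  refine Setoid.eqvGen_le ?_
  rintro _ _ ⟨x, y, hxy, rfl, rfl⟩
  exact h hxy

theorem setoidMap_le_iff {s : Setoid α} {t : Setoid β} {f : α → β} :
    s.map f ≤ t ↔ s ≤ t.comap f :=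
  gc_setoidMap_comap f s t

theorem setoidMap_sup (s t : Setoid α) (f : α → β) : (s ⊔ t).map f = s.map f ⊔ t.map f :=
  (gc_setoidMap_comap f).l_sup

theorem setoidMap_map (s : Setoid α) (f : α → β) (g : β → γ) :
    (s.map f).map g = s.map (g ∘ f) :=
  eq_of_forall_ge_iff fun t => by simp only [setoidMap_le_iff, Setoid.comap_comp]

theorem rel_sup_left {s t : Setoid α} {x y : α} (h : s x y) : (s ⊔ t) x y :=
  (le_sup_left : s ≤ s ⊔ t) h

theorem rel_sup_right {s t : Setoid α} {x y : α} (h : t x y) : (s ⊔ t) x y :=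
  (le_sup_right : t ≤ s ⊔ t) h

/-- A path in `S ⊔ t.map e` between two `S`-classes only needs its first entry into and its last
exit from the image of `e`. -/
theorem sup_map_apply {S : Setoid β} {t : Setoid α} {e : α → β} {u v : β} :
    (S ⊔ t.map e) u v ↔
      S u v ∨ ∃ a b, S u (e a) ∧ (S.comap e ⊔ t) a b ∧ S (e b) v := by
  have h_comap : S.comap e ⊔ t ≤ (S ⊔ t.map e).comap e :=
    sup_le (fun _ _ h => rel_sup_left h)
      (setoidMap_le_iff.1 le_sup_right)
  constructor
  · let T : Setoid β :=
      { r := fun u v => S u v ∨ ∃ a b, S u (e a) ∧ (S.comap e ⊔ t) a b ∧ S (e b) v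
        iseqv := by
          refine ⟨fun u => .inl (S.refl' u), ?_, ?_⟩
          · rintro u v (h | ⟨a, b, hu, hab, hv⟩)
            · exact .inl (S.symm' h)
            · exact .inr ⟨b, a, S.symm' hv, Setoid.symm' _ hab, S.symm' hu⟩
          · rintro u v w (h | ⟨a, b, hu, hab, hv⟩) (h' | ⟨c, d, hv', hcd, hw⟩)
            · exact .inl (S.trans' h h')
            · exact .inr ⟨c, d, S.trans' h hv', hcd, hw⟩
            · exact .inr ⟨a, b, hu, hab, S.trans' hv h'⟩
            · have hbc : (S.comap e ⊔ t) b c :=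
                rel_sup_left (S.trans' hv hv' : S (e b) (e c))
              exact .inr ⟨a, d, hu, Setoid.trans' _ hab (Setoid.trans' _ hbc hcd), hw⟩ }
    have hT : S ⊔ t.map e ≤ T := by
      refine sup_le (fun _ _ h => .inl h) (setoidMap_le_iff.2 fun a b h => ?_)
      exact .inr ⟨a, b, S.refl' _, rel_sup_right h, S.refl' _⟩
    exact fun h => hT h
  · rintro (h | ⟨a, b, hu, hab, hv⟩)
    · exact rel_sup_left h
    · exact Setoid.trans' _ (rel_sup_left hu)
        (Setoid.trans' _ (h_comap hab) (rel_sup_left hv))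

theorem comap_sup_map (S : Setoid β) (t : Setoid α) (e : α → β) :
    (S ⊔ t.map e).comap e = S.comap e ⊔ t := by
  ext a b
  rw [Setoid.comap_rel, sup_map_apply]
  constructor
  · rintro (h | ⟨c, d, ha, hcd, hb⟩)
    · exact rel_sup_left h
    · exact Setoid.trans' _ (rel_sup_left ha)
        (Setoid.trans' _ hcd (rel_sup_left hb))
  · exact fun h => .inr ⟨a, b, S.refl' _, h, S.refl' _⟩

theorem sumSetoid_inl_inl (s : Setoid α) (t : Setoid β) (x y : α) :
    sumSetoid s t (.inl x) (.inl y) ↔ s x y :=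
  Sum.liftRel_inl_inl

theorem sumSetoid_inr_inr (s : Setoid α) (t : Setoid β) (x y : β) :
    sumSetoid s t (.inr x) (.inr y) ↔ t x y :=
  Sum.liftRel_inr_inr

theorem not_sumSetoid_inl_inr (s : Setoid α) (t : Setoid β) (x : α) (y : β) :
    ¬ sumSetoid s t (.inl x) (.inr y) :=
  Sum.not_liftRel_inl_inr

theorem not_sumSetoid_inr_inl (s : Setoid α) (t : Setoid β) (x : β) (y : α) :
    ¬ sumSetoid s t (.inr x) (.inl y) :=
  Sum.not_liftRel_inr_inl

theorem sumSetoid_le_iff {s : Setoid α} {t : Setoid β} {u : Setoid (α ⊕ β)} :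
    sumSetoid s t ≤ u ↔ s ≤ u.comap Sum.inl ∧ t ≤ u.comap Sum.inr := by
  refine ⟨fun h => ⟨fun _ _ hs => h (.inl hs), fun _ _ ht => h (.inr ht)⟩, ?_⟩
  rintro ⟨hs, ht⟩ _ _ (h | h)
  exacts [hs h, ht h]

theorem sumSetoid_eq_sup (s : Setoid α) (t : Setoid β) :
    sumSetoid s t = s.map Sum.inl ⊔ t.map Sum.inr :=
  eq_of_forall_ge_iff fun u => by
    rw [sumSetoid_le_iff, sup_le_iff, setoidMap_le_iff, setoidMap_le_iff]

theorem comap_sumMap_sumSetoid {α' β' : Type*} (s : Setoid α) (t : Setoid β) (f : α' → α)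
    (g : β' → β) :
    (sumSetoid s t).comap (Sum.map f g) = sumSetoid (s.comap f) (t.comap g) := by
  ext (x | x) (y | y) <;>
    simp only [Setoid.comap_rel, Sum.map_inl, Sum.map_inr, sumSetoid_inl_inl, sumSetoid_inr_inr,
      not_sumSetoid_inl_inr, not_sumSetoid_inr_inl]

end Setoid

/-- The strand through a point: `Sum.inl i` and `Sum.inr i` are the upper and the lower endpoint of
strand `i`. -/
def strand {α : Type*} : α ⊕ α → α :=
  Sum.elim id id

@[simp]
theorem strand_inl {α : Type*} (i : α) : strand (.inl i) = i :=
  rfl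

@[simp]
theorem strand_inr {α : Type*} (i : α) : strand (.inr i) = i :=
  rfl

@[simp]
theorem strand_map {α β : Type*} (f : α → β) (x : α ⊕ α) :
    strand (x.map f f) = f (strand x) := by
  cases x <;> rfl

@[simp]
theorem strand_swap {α : Type*} (x : α ⊕ α) : strand x.swap = strand x := by
  cases x <;> rfl

section Composition

variable {k l m n : ℕ}

theorem bigS_eq_sup (p : PP k l) (q : PP l m) :
    bigS p q = p.map (Sum.map id Sum.inl) ⊔ q.map Sum.inr := by
  refine le_antisymm (Setoid.eqvGen_le ?_) (sup_le (setoidMap_le_iff.2 fun a b h => ?_)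
    (setoidMap_le_iff.2 fun a b h => ?_))
  · rintro _ _ (⟨a, b, h, rfl, rfl⟩ | ⟨a, b, h, rfl, rfl⟩)
    · exact rel_sup_left (Setoid.le_comap_map h)
    · exact rel_sup_right (Setoid.le_comap_map h)
  · exact .rel _ _ (.inl ⟨a, b, h, rfl, rfl⟩)
  · exact .rel _ _ (.inr ⟨a, b, h, rfl, rfl⟩)

theorem bigS_le_iff {p : PP k l} {q : PP l m} {t : Setoid (Fin k ⊕ (Fin l ⊕ Fin m))} :
    bigS p q ≤ t ↔ p ≤ t.comap (Sum.map id Sum.inl) ∧ q ≤ t.comap Sum.inr := by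
  rw [bigS_eq_sup, sup_le_iff, setoidMap_le_iff, setoidMap_le_iff]

theorem le_comap_bigS_left (p : PP k l) (q : PP l m) :
    p ≤ (bigS p q).comap (Sum.map id Sum.inl) :=
  (bigS_le_iff.1 le_rfl).1

theorem le_comap_bigS_right (p : PP k l) (q : PP l m) : q ≤ (bigS p q).comap Sum.inr :=
  (bigS_le_iff.1 le_rfl).2

theorem compP_le {p : PP k l} {q : PP l m} {t : PP k m} {φ : Fin l → Fin k ⊕ Fin m}
    (hp : p ≤ t.comap (Sum.elim Sum.inl φ)) (hq : q ≤ t.comap (Sum.elim φ Sum.inr)) :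
    compP q p ≤ t := by
  have h_big : bigS p q ≤ t.comap (Sum.elim Sum.inl (Sum.elim φ Sum.inr)) :=
    bigS_le_iff.2 ⟨fun a b h => by rcases a <;> rcases b <;> exact hp h, fun a b h => hq h⟩
  intro a b h
  rcases a <;> rcases b <;> exact h_big h

theorem compP_le_comap {k' l' m' : ℕ} {p : PP k l} {q : PP l m} {p' : PP k' l'} {q' : PP l' m'}
    {f : Fin k → Fin k'} {g : Fin l → Fin l'} {h : Fin m → Fin m'}
    (hp : p ≤ p'.comap (Sum.map f g)) (hq : q ≤ q'.comap (Sum.map g h)) :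
    compP q p ≤ (compP q' p').comap (Sum.map f h) := by
  have h_big : bigS p q ≤ (bigS p' q').comap (Sum.map f (Sum.map g h)) := by
    refine bigS_le_iff.2 ⟨fun a b hab => ?_, fun a b hab => ?_⟩
    · have := le_comap_bigS_left p' q' (hp hab)
      rcases a <;> rcases b <;> exact this
    · exact le_comap_bigS_right p' q' (hq hab)
  intro a b hab
  rcases a <;> rcases b <;> exact h_big hab

theorem swapP_swapP (p : PP k l) : swapP (swapP p) = p := by
  rw [swapP, swapP, ← Setoid.comap_comp, Sum.swap_swap_eq, Setoid.comap_id]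

theorem swapP_apply (p : PP k l) (a b : Fin l ⊕ Fin k) : swapP p a b ↔ p a.swap b.swap :=
  Iff.rfl

theorem swapP_swap_swap (p : PP k l) (a b : Fin k ⊕ Fin l) :
    swapP p a.swap b.swap ↔ p a b := by
  rw [swapP_apply, Sum.swap_swap, Sum.swap_swap]

theorem swapP_eq_map (p : PP k l) : swapP p = p.map Sum.swap := by
  refine le_antisymm (fun a b h => ?_) (setoidMap_le_iff.2 fun a b h => ?_)
  · simpa only [Setoid.comap_rel, Sum.swap_swap] using
      Setoid.le_comap_map (f := Sum.swap) ((swapP_apply p a b).1 h)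
  · exact (swapP_swap_swap p a b).2 h

theorem swapP_compP_le (q : PP l m) (p : PP k l) :
    swapP (compP q p) ≤ compP (swapP p) (swapP q) := by
  set e : Fin k ⊕ (Fin l ⊕ Fin m) → Fin m ⊕ (Fin l ⊕ Fin k) :=
    Sum.elim (Sum.inr ∘ Sum.inr) (Sum.elim (Sum.inr ∘ Sum.inl) Sum.inl)
  have h_big : bigS p q ≤ (bigS (swapP q) (swapP p)).comap e := by
    refine bigS_le_iff.2 ⟨fun a b h => ?_, fun a b h => ?_⟩
    · have := le_comap_bigS_right (swapP q) (swapP p) ((swapP_swap_swap p a b).2 h)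
      rcases a <;> rcases b <;> exact this
    · have := le_comap_bigS_left (swapP q) (swapP p) ((swapP_swap_swap q a b).2 h)
      rcases a <;> rcases b <;> exact this
  intro a b h
  rcases a <;> rcases b <;> exact h_big h

theorem swapP_compP (q : PP l m) (p : PP k l) :
    swapP (compP q p) = compP (swapP p) (swapP q) := by
  refine le_antisymm (swapP_compP_le q p) ?_
  have h : swapP (compP (swapP p) (swapP q)) ≤ compP q p := by
    simpa only [swapP_swapP] using swapP_compP_le (swapP p) (swapP q)
  intro a b hab
  exact h ((swapP_swap_swap _ a b).2 hab)

theorem idP_apply (x y : Fin k ⊕ Fin k) : idP k x y ↔ strand x = strand y :=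
  Iff.rfl

theorem compP_idP_left (p : PP k l) : compP (idP l) p = p := by
  refine le_antisymm (compP_le (φ := Sum.inr) (fun a b h => ?_) fun a b h => ?_) fun a b h => ?_
  · rcases a <;> rcases b <;> exact h
  · have (x : Fin l ⊕ Fin l) :
        Sum.elim Sum.inr Sum.inr x = (Sum.inr (strand x) : Fin k ⊕ Fin l) := by
      rcases x <;> rfl
    rw [Setoid.comap_rel, this, this]
    exact (congrArg Sum.inr h) ▸ p.refl' _
  · have h_mid (x : Fin k ⊕ Fin l) :
        bigS p (idP l) (Sum.map id Sum.inr x) (Sum.map id Sum.inl x) := by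
      rcases x with x | x
      · exact Setoid.refl' _ _
      · exact le_comap_bigS_right p (idP l) (x := .inr x) (y := .inl x) rfl
    refine (bigS p (idP l)).trans' (h_mid a) ?_
    exact (bigS p (idP l)).trans' (le_comap_bigS_left p (idP l) h) (Setoid.symm' _ (h_mid b))

theorem compP_eq_sup {U : PP k l} {f : Fin l → Fin k} (hf : ∀ i, U (.inl (f i)) (.inr i))
    (V : PP l m) :
    compP V U = (U.comap Sum.inl).map Sum.inl ⊔ V.map (Sum.map f id) := by
  set T := (U.comap Sum.inl).map Sum.inl ⊔ V.map (Sum.map f id)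
  have hV : V ≤ T.comap (Sum.map f id) := setoidMap_le_iff.1 le_sup_right
  have hU : U.comap Sum.inl ≤ T.comap Sum.inl := setoidMap_le_iff.1 le_sup_left
  have h_base (x) : U x (.inl (Sum.elim id f x)) := by
    rcases x with x | x
    exacts [U.refl' _, U.symm' (hf x)]
  refine le_antisymm (compP_le (φ := Sum.inl ∘ f) (fun a b h => ?_) hV) (sup_le ?_ ?_)
  · have := hU (U.trans' (U.symm' (h_base a)) (U.trans' h (h_base b)))
    rcases a <;> rcases b <;> exact this
  · exact setoidMap_le_iff.2 fun i j h => le_comap_bigS_left U V h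
  · have h_mid (x : Fin l ⊕ Fin m) :
        bigS U V (Sum.map id Sum.inr (Sum.map f id x)) (.inr x) := by
      rcases x with x | x
      exacts [le_comap_bigS_left U V (hf x), Setoid.refl' _ _]
    refine setoidMap_le_iff.2 fun a b h => (bigS U V).trans' (h_mid a) ?_
    exact (bigS U V).trans' (le_comap_bigS_right U V h) ((bigS U V).symm' (h_mid b))

theorem compP_swapP_eq_sup {U : PP k l} {f : Fin l → Fin k}
    (hf : ∀ i, U (.inl (f i)) (.inr i)) (W : PP m l) :
    compP (swapP U) W = W.map (Sum.map id f) ⊔ (U.comap Sum.inl).map Sum.inr := by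
  have h_swap : (Sum.swap ∘ Sum.map f id) ∘ Sum.swap = (Sum.map id f : Fin m ⊕ Fin l → _) := by
    funext x; rcases x <;> rfl
  rw [← swapP_swapP (compP _ _), swapP_compP, swapP_swapP, compP_eq_sup hf, swapP_eq_map,
    setoidMap_sup, setoidMap_map, setoidMap_map, swapP_eq_map, setoidMap_map, sup_comm, h_swap]
  rfl

end Composition

/-- The conjugate `U* h U` of a partition `h` by `U`. -/
abbrev conjP {k l : ℕ} (U : PP k l) (h : PP l l) : PP k k :=
  compP (swapP U) (compP h U)

theorem conjP_idP {k l : ℕ} (U : PP k l) : conjP U (idP l) = compP (swapP U) U := by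
  rw [conjP, compP_idP_left]

/-- Two unconnected copies, one in each row, of the partition that `U` induces on its upper
points. -/
abbrev doubleRow {k l : ℕ} (U : PP k l) : PP k k :=
  sumSetoid (U.comap Sum.inl) (U.comap Sum.inl)

theorem rel_of_doubleRow {k l : ℕ} {U : PP k l} {x y : Fin k ⊕ Fin k} (hxy : doubleRow U x y) :
    U (.inl (strand x)) (.inl (strand y)) := by
  rcases hxy with hxy | hxy <;> exact hxy

/-- `f` chooses an upper point in the block of each lower point of `U`, and distinct lower points
lie in distinct blocks. Such an `f` exists exactly when `U U*` is the identity. -/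
structure IsTransversal {k l : ℕ} (U : PP k l) (f : Fin l → Fin k) : Prop where
  rel : ∀ i, U (.inl (f i)) (.inr i)
  inj : ∀ i j, U (.inr i) (.inr j) → i = j

namespace IsTransversal

variable {k l : ℕ} {U : PP k l} {f : Fin l → Fin k}

theorem rel_inl_iff (hf : IsTransversal U f) {x : Fin k} {i : Fin l} :
    U (.inl x) (.inl (f i)) ↔ U (.inl x) (.inr i) :=
  ⟨fun h => U.trans' h (hf.rel i), fun h => U.trans' h (U.symm' (hf.rel i))⟩

theorem comap_doubleRow (hf : IsTransversal U f) : (doubleRow U).comap (Sum.map f f) = ⊥ := by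
  have h_bot : (U.comap Sum.inl).comap f = ⊥ := eq_bot_iff.2 fun i j h =>
    hf.inj i j (U.trans' (U.symm' (hf.rel i)) (hf.rel_inl_iff.1 h))
  rw [comap_sumMap_sumSetoid, h_bot, eq_bot_iff, sumSetoid_le_iff]
  constructor <;> rintro i _ rfl <;> exact Setoid.refl' _ _

theorem conjP_eq_sup (hf : IsTransversal U f) (h : PP l l) :
    conjP U h = doubleRow U ⊔ h.map (Sum.map f f) := by
  rw [conjP, compP_swapP_eq_sup hf.rel, compP_eq_sup hf.rel, setoidMap_sup, setoidMap_map,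
    setoidMap_map, Sum.map_comp_map, Function.comp_id, Function.id_comp, doubleRow,
    sumSetoid_eq_sup, sup_right_comm]
  rfl

theorem conjP_le_iff (hf : IsTransversal U f) {h : PP l l} {t : PP k k} :
    conjP U h ≤ t ↔ doubleRow U ≤ t ∧ h ≤ t.comap (Sum.map f f) := by
  rw [hf.conjP_eq_sup, sup_le_iff, setoidMap_le_iff]

theorem conjP_apply (hf : IsTransversal U f) {h : PP l l} {u v : Fin k ⊕ Fin k} :
    conjP U h u v ↔ doubleRow U u v ∨
      ∃ s t, doubleRow U u (Sum.map f f s) ∧ h s t ∧ doubleRow U (Sum.map f f t) v := by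
  rw [hf.conjP_eq_sup, sup_map_apply, hf.comap_doubleRow, bot_sup_eq]

theorem comap_conjP (hf : IsTransversal U f) (h : PP l l) :
    (conjP U h).comap (Sum.map f f) = h := by
  rw [hf.conjP_eq_sup, comap_sup_map, hf.comap_doubleRow, bot_sup_eq]

theorem conjP_injective (hf : IsTransversal U f) : Function.Injective (conjP U) :=
  Function.LeftInverse.injective hf.comap_conjP

theorem conjP_idP_inl_inl (hf : IsTransversal U f) {x y : Fin k} :
    conjP U (idP l) (.inl x) (.inl y) ↔ U (.inl x) (.inl y) := by
  simp only [hf.conjP_apply, Sum.exists, Sum.map_inl, Sum.map_inr, sumSetoid_inl_inl,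
    not_sumSetoid_inl_inr, not_sumSetoid_inr_inl, false_and, and_false, exists_false, or_false]
  refine or_iff_left_of_imp ?_
  rintro ⟨i, j, hx, hij, hy⟩
  obtain rfl : i = j := hij
  exact U.trans' hx hy

theorem conjP_idP_inl_inr (hf : IsTransversal U f) {x y : Fin k} :
    conjP U (idP l) (.inl x) (.inr y) ↔ ∃ i, U (.inl x) (.inr i) ∧ U (.inl y) (.inr i) := by
  simp only [hf.conjP_apply, Sum.exists, Sum.map_inl, Sum.map_inr, sumSetoid_inl_inl,
    sumSetoid_inr_inr, not_sumSetoid_inl_inr, false_and, and_false, exists_false, or_false,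
    false_or]
  constructor
  · rintro ⟨i, j, hx, hij, hy⟩
    obtain rfl : i = j := hij
    exact ⟨i, hf.rel_inl_iff.1 hx, hf.rel_inl_iff.1 (U.symm' hy)⟩
  · rintro ⟨i, hx, hy⟩
    exact ⟨i, i, hf.rel_inl_iff.2 hx, rfl, U.symm' (hf.rel_inl_iff.2 hy)⟩

theorem compP_conjP_idP_conjP (hf : IsTransversal U f) (h : PP l l) :
    compP (conjP U (idP l)) (conjP U h) = conjP U h := by
  have h_row : doubleRow U ≤ conjP U h := (hf.conjP_le_iff.1 le_rfl).1
  refine le_antisymm (compP_le (φ := Sum.inr) (fun a b hab => ?_) ?_)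
    (hf.conjP_le_iff.2 ⟨?_, fun s t hst => ?_⟩)
  · rcases a <;> rcases b <;> exact hab
  · refine hf.conjP_le_iff.2 ⟨sumSetoid_le_iff.2 ⟨fun i j hij => h_row (.inr hij),
      fun i j hij => h_row (.inr hij)⟩, fun s t hst => ?_⟩
    have h_base (x : Fin l ⊕ Fin l) :
        Sum.elim Sum.inr Sum.inr (Sum.map f f x) =
          (Sum.inr (f (strand x)) : Fin k ⊕ Fin k) := by
      rcases x <;> rfl
    rw [Setoid.comap_rel, Setoid.comap_rel, h_base, h_base,
      show strand s = strand t from hst]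
  · refine sumSetoid_le_iff.2 ⟨fun i j hij => ?_, fun i j hij => ?_⟩
    · exact le_comap_bigS_left _ _ (h_row (.inl hij))
    · exact le_comap_bigS_right _ _ ((hf.conjP_le_iff.1 le_rfl).1 (.inr hij))
  · have h_mid (x : Fin l ⊕ Fin l) : bigS (conjP U h) (conjP U (idP l))
        (Sum.map id Sum.inr (Sum.map f f x)) (Sum.map id Sum.inl (Sum.map f f x)) := by
      rcases x with i | i
      · exact Setoid.refl' _ _
      · exact le_comap_bigS_right _ _ (Setoid.symm' _
          (hf.conjP_idP_inl_inr.2 ⟨i, hf.rel i, hf.rel i⟩))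
    refine (bigS _ _).trans' (h_mid s) ((bigS _ _).trans' ?_ ((bigS _ _).symm' (h_mid t)))
    exact le_comap_bigS_left _ _ ((hf.conjP_le_iff.1 le_rfl).2 hst)

end IsTransversal

section Tensor

variable {k l m k' l' m' : ℕ}

theorem tensorEquiv_map_castAdd (u : Fin k ⊕ Fin l) :
    tensorEquiv k l k' l' (u.map (Fin.castAdd k') (Fin.castAdd l')) = .inl u := by
  rcases u with i | i <;> simp [tensorEquiv]

theorem tensorEquiv_map_natAdd (u : Fin k' ⊕ Fin l') :
    tensorEquiv k l k' l' (u.map (Fin.natAdd k) (Fin.natAdd l)) = .inr u := by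
  rcases u with i | i <;> simp [tensorEquiv]

theorem eq_map_castAdd_or_eq_map_natAdd (x : Fin (k + k') ⊕ Fin (l + l')) :
    (∃ u, x = Sum.map (Fin.castAdd k') (Fin.castAdd l') u) ∨
      ∃ u, x = Sum.map (Fin.natAdd k) (Fin.natAdd l) u := by
  rcases hx : tensorEquiv k l k' l' x with u | u
  · exact .inl ⟨u, (tensorEquiv ..).injective (hx.trans (tensorEquiv_map_castAdd u).symm)⟩
  · exact .inr ⟨u, (tensorEquiv ..).injective (hx.trans (tensorEquiv_map_natAdd u).symm)⟩

theorem tensorP_apply (p : PP k l) (q : PP k' l') (x y : Fin (k + k') ⊕ Fin (l + l')) :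
    tensorP p q x y ↔ sumSetoid p q (tensorEquiv k l k' l' x) (tensorEquiv k l k' l' y) :=
  Iff.rfl

@[simp]
theorem tensorP_castAdd_castAdd (p : PP k l) (q : PP k' l') (u v : Fin k ⊕ Fin l) :
    tensorP p q (u.map (Fin.castAdd k') (Fin.castAdd l'))
      (v.map (Fin.castAdd k') (Fin.castAdd l')) ↔ p u v := by
  rw [tensorP_apply, tensorEquiv_map_castAdd, tensorEquiv_map_castAdd, sumSetoid_inl_inl]

@[simp]
theorem tensorP_natAdd_natAdd (p : PP k l) (q : PP k' l') (u v : Fin k' ⊕ Fin l') :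
    tensorP p q (u.map (Fin.natAdd k) (Fin.natAdd l))
      (v.map (Fin.natAdd k) (Fin.natAdd l)) ↔ q u v := by
  rw [tensorP_apply, tensorEquiv_map_natAdd, tensorEquiv_map_natAdd, sumSetoid_inr_inr]

@[simp]
theorem not_tensorP_castAdd_natAdd (p : PP k l) (q : PP k' l') (u : Fin k ⊕ Fin l)
    (v : Fin k' ⊕ Fin l') :
    ¬ tensorP p q (u.map (Fin.castAdd k') (Fin.castAdd l'))
      (v.map (Fin.natAdd k) (Fin.natAdd l)) := by
  rw [tensorP_apply, tensorEquiv_map_castAdd, tensorEquiv_map_natAdd]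
  exact not_sumSetoid_inl_inr p q u v

@[simp]
theorem not_tensorP_natAdd_castAdd (p : PP k l) (q : PP k' l') (u : Fin k ⊕ Fin l)
    (v : Fin k' ⊕ Fin l') :
    ¬ tensorP p q (v.map (Fin.natAdd k) (Fin.natAdd l))
      (u.map (Fin.castAdd k') (Fin.castAdd l')) :=
  fun h => not_tensorP_castAdd_natAdd p q u v (Setoid.symm' _ h)

theorem tensorP_le_iff {p : PP k l} {q : PP k' l'} {t : PP (k + k') (l + l')} :
    tensorP p q ≤ t ↔ p ≤ t.comap (Sum.map (Fin.castAdd k') (Fin.castAdd l')) ∧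
      q ≤ t.comap (Sum.map (Fin.natAdd k) (Fin.natAdd l)) := by
  refine ⟨fun h => ⟨fun u v huv => h ((tensorP_castAdd_castAdd p q u v).2 huv),
    fun u v huv => h ((tensorP_natAdd_natAdd p q u v).2 huv)⟩, ?_⟩
  rintro ⟨hp, hq⟩ x y h
  obtain ⟨u, rfl⟩ | ⟨u, rfl⟩ := eq_map_castAdd_or_eq_map_natAdd x <;>
    obtain ⟨v, rfl⟩ | ⟨v, rfl⟩ := eq_map_castAdd_or_eq_map_natAdd y
  · exact hp ((tensorP_castAdd_castAdd p q u v).1 h)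
  · exact (not_tensorP_castAdd_natAdd p q u v h).elim
  · exact (not_tensorP_natAdd_castAdd p q v u h).elim
  · exact hq ((tensorP_natAdd_natAdd p q u v).1 h)

theorem sumSwap_map {α β γ δ : Type*} (f : α → γ) (g : β → δ) (x : α ⊕ β) :
    (x.map f g).swap = x.swap.map g f := by
  cases x <;> rfl

theorem swapP_tensorP (p : PP k l) (q : PP k' l') :
    swapP (tensorP p q) = tensorP (swapP p) (swapP q) := by
  ext x y
  obtain ⟨u, rfl⟩ | ⟨u, rfl⟩ := eq_map_castAdd_or_eq_map_natAdd x <;>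
    obtain ⟨v, rfl⟩ | ⟨v, rfl⟩ := eq_map_castAdd_or_eq_map_natAdd y <;>
    simp [swapP_apply, sumSwap_map]

theorem tensorP_compP (q : PP l m) (p : PP k l) (q' : PP l' m') (p' : PP k' l') :
    tensorP (compP q p) (compP q' p') = compP (tensorP q q') (tensorP p p') := by
  refine le_antisymm (tensorP_le_iff.2 ⟨?_, ?_⟩) fun x y h => ?_
  · exact compP_le_comap (tensorP_le_iff.1 le_rfl).1 (tensorP_le_iff.1 le_rfl).1
  · exact compP_le_comap (tensorP_le_iff.1 le_rfl).2 (tensorP_le_iff.1 le_rfl).2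
  · let E : Fin (k + k') ⊕ (Fin (l + l') ⊕ Fin (m + m')) →
        (Fin k ⊕ (Fin l ⊕ Fin m)) ⊕ (Fin k' ⊕ (Fin l' ⊕ Fin m')) :=
      Sum.elim (Sum.map .inl .inl ∘ finSumFinEquiv.symm)
        (Sum.map .inr .inr ∘ tensorEquiv l m l' m')
    have hE_left₁ (u : Fin k ⊕ Fin l) :
        E (Sum.map id .inl (u.map (Fin.castAdd k') (Fin.castAdd l'))) = .inl (u.map id .inl) := by
      rcases u with i | i <;> simp [E, tensorEquiv]
    have hE_right₁ (u : Fin k' ⊕ Fin l') :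
        E (Sum.map id .inl (u.map (Fin.natAdd k) (Fin.natAdd l))) = .inr (u.map id .inl) := by
      rcases u with i | i <;> simp [E, tensorEquiv]
    have hE_left₂ (u : Fin l ⊕ Fin m) :
        E (.inr (u.map (Fin.castAdd l') (Fin.castAdd m'))) = .inl (.inr u) := by
      simp [E, tensorEquiv_map_castAdd]
    have hE_right₂ (u : Fin l' ⊕ Fin m') :
        E (.inr (u.map (Fin.natAdd l) (Fin.natAdd m))) = .inr (.inr u) := by
      simp [E, tensorEquiv_map_natAdd]
    have hE_outer (x : Fin (k + k') ⊕ Fin (m + m')) :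
        E (x.map id .inr) = (tensorEquiv k m k' m' x).map (Sum.map id .inr) (Sum.map id .inr) := by
      obtain ⟨u, rfl⟩ | ⟨u, rfl⟩ := eq_map_castAdd_or_eq_map_natAdd x <;>
        rcases u with i | i <;> simp [E, tensorEquiv]
    have h_big : bigS (tensorP p p') (tensorP q q') ≤
        (sumSetoid (bigS p q) (bigS p' q')).comap E := by
      refine bigS_le_iff.2 ⟨tensorP_le_iff.2 ⟨fun u v huv => ?_, fun u v huv => ?_⟩,
        tensorP_le_iff.2 ⟨fun u v huv => ?_, fun u v huv => ?_⟩⟩ <;>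
        simp only [Setoid.comap_rel, hE_left₁, hE_right₁, hE_left₂, hE_right₂]
      · exact .inl (le_comap_bigS_left p q huv)
      · exact .inr (le_comap_bigS_left p' q' huv)
      · exact .inl (le_comap_bigS_right p q huv)
      · exact .inr (le_comap_bigS_right p' q' huv)
    have h_outer := h_big h
    rw [Setoid.comap_rel, hE_outer, hE_outer, ← Setoid.comap_rel, comap_sumMap_sumSetoid]
      at h_outer
    exact h_outer

theorem tensorP_idP (k l : ℕ) : tensorP (idP k) (idP l) = idP (k + l) := by
  ext x y
  obtain ⟨u, rfl⟩ | ⟨u, rfl⟩ := eq_map_castAdd_or_eq_map_natAdd x <;>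
    obtain ⟨v, rfl⟩ | ⟨v, rfl⟩ := eq_map_castAdd_or_eq_map_natAdd y <;>
    simp only [tensorP_castAdd_castAdd, tensorP_natAdd_natAdd, not_tensorP_castAdd_natAdd,
      not_tensorP_natAdd_castAdd] <;>
    rcases u with i | i <;> rcases v with j | j <;>
    simp [idP_apply, Fin.ext_iff] <;> lia

theorem IsTransversal.tensorP {U : PP k l} {U' : PP k' l'} {f : Fin l → Fin k}
    {f' : Fin l' → Fin k'} (hf : IsTransversal U f) (hf' : IsTransversal U' f') :
    IsTransversal (_root_.tensorP U U')
      (Fin.addCases (fun i => (f i).castAdd k') (fun i => (f' i).natAdd k)) where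
  rel i := by
    induction i using Fin.addCases with
    | left i => simpa using (tensorP_castAdd_castAdd U U' _ _).2 (hf.rel i)
    | right i => simpa using (tensorP_natAdd_natAdd U U' _ _).2 (hf'.rel i)
  inj i j h := by
    induction i using Fin.addCases with
    | left i =>
      induction j using Fin.addCases with
      | left j => rw [hf.inj i j ((tensorP_castAdd_castAdd U U' (.inr i) (.inr j)).1 h)]
      | right j => exact (not_tensorP_castAdd_natAdd U U' (.inr i) (.inr j) h).elim
    | right i =>
      induction j using Fin.addCases with
      | left j => exact (not_tensorP_natAdd_castAdd U U' (.inr j) (.inr i) h).elim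
      | right j => rw [hf'.inj i j ((tensorP_natAdd_natAdd U U' (.inr i) (.inr j)).1 h)]

theorem mixP_eq_conjP {a b ta tb : ℕ} (lu : PP a ta) (ru : PP b tb)
    (h : PP (ta + tb) (ta + tb)) : mixP lu ru h = conjP (tensorP lu ru) h := by
  rw [mixP, ← swapP_tensorP]

theorem tensorP_conjP_idP (U : PP k l) (U' : PP k' l') :
    tensorP (conjP U (idP l)) (conjP U' (idP l')) =
      conjP (tensorP U U') (idP (l + l')) := by
  rw [tensorP_compP, tensorP_compP, tensorP_idP, ← swapP_tensorP]

end Tensor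

section PartialTrace

variable {k m n : ℕ}

/-- The partition joining the upper and the lower endpoint of each strand outside the range
of `e`. -/
abbrev closing (e : Fin k → Fin n) : PP n n :=
  Relation.EqvGen.setoid fun u v => ∃ x ∉ Set.range e, u = .inl x ∧ v = .inr x

theorem closing_le_iff {e : Fin k → Fin n} {t : PP n n} :
    closing e ≤ t ↔ ∀ x ∉ Set.range e, t (.inl x) (.inr x) := by
  refine ⟨fun h x hx => h (.rel _ _ ⟨x, hx, rfl, rfl⟩), fun h => Setoid.eqvGen_le ?_⟩
  rintro _ _ ⟨x, hx, rfl, rfl⟩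
  exact h x hx

/-- The partial trace of `p`: the strands outside the range of `e` are closed up, and the strands
in the range are kept and renumbered by `e`. -/
abbrev partialTrace (e : Fin k → Fin n) (p : PP n n) : PP k k :=
  (p ⊔ closing e).comap (Sum.map e e)

theorem partialTrace_id (p : PP n n) : partialTrace id p = p := by
  have h_closing : closing (id : Fin n → Fin n) ≤ p :=
    closing_le_iff.2 fun x hx => (hx ⟨x, rfl⟩).elim
  rw [partialTrace, sup_eq_left.2 h_closing, Sum.map_id_id, Setoid.comap_id]

theorem closing_comp {e : Fin m → Fin n} (he : Function.Injective e) (e' : Fin k → Fin m) :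
    closing (e ∘ e') = closing e ⊔ (closing e').map (Sum.map e e) := by
  refine eq_of_forall_ge_iff fun t => ?_
  rw [sup_le_iff, setoidMap_le_iff, closing_le_iff, closing_le_iff, closing_le_iff]
  constructor
  · refine fun h => ⟨fun x hx => h x fun hx' => hx (Set.range_comp_subset_range e' e hx'),
      fun y hy => h (e y) ?_⟩
    rintro ⟨i, hi⟩
    exact hy ⟨i, he hi⟩
  · rintro ⟨h, h'⟩ x hx
    by_cases hxe : x ∈ Set.range e
    · obtain ⟨y, rfl⟩ := hxe
      refine h' y ?_
      rintro ⟨i, rfl⟩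
      exact hx ⟨i, rfl⟩
    · exact h x hxe

theorem partialTrace_partialTrace {e : Fin m → Fin n} (he : Function.Injective e)
    (e' : Fin k → Fin m) (p : PP n n) :
    partialTrace e' (partialTrace e p) = partialTrace (e ∘ e') p := by
  rw [partialTrace, partialTrace, partialTrace, closing_comp he, ← sup_assoc,
    ← Sum.map_comp_map, Setoid.comap_comp, comap_sup_map]

/-- What the left and the right rotations have in common: the upper point `z k` moves to the lower
point `z l`, and all other points stay in their row and keep their order. -/
structure IsRotation (z : ∀ m, Fin (m + 1))
    (rot : ∀ k l, (Fin k ⊕ Fin (l + 1)) ≃ (Fin (k + 1) ⊕ Fin l)) : Prop where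
  inl : ∀ k l i, rot k l (.inl i) = .inl ((z k).succAbove i)
  inr_z : ∀ k l, rot k l (.inr (z l)) = .inl (z k)
  inr_succAbove : ∀ k l j, rot k l (.inr ((z l).succAbove j)) = .inr j

theorem isRotation_rotEquivR : IsRotation Fin.last rotEquivR where
  inl k l i := by simp [rotEquivR]; rfl
  inr_z k l := by
    have : Fin.last l = Fin.natAdd l (0 : Fin 1) := rfl
    simp [rotEquivR, this]; rfl
  inr_succAbove k l j := by
    have : (Fin.last l).succAbove j = Fin.castAdd 1 j := Fin.succAbove_last_apply j
    rw [this]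
    simp [rotEquivR]

theorem isRotation_rotEquivL : IsRotation (fun _ => 0) rotEquivL where
  inl k l i := by
    simp [rotEquivL]
  inr_z k l := by
    have : (finCongr (Nat.add_comm l 1)) 0 = Fin.castAdd l (0 : Fin 1) := by
      simp [Fin.ext_iff]
    simp only [rotEquivL, Equiv.trans_apply, Equiv.sumCongr_apply, Sum.map_inr, this]
    simp [Fin.ext_iff]
  inr_succAbove k l j := by
    have : (finCongr (Nat.add_comm l 1)) j.succ = Fin.natAdd 1 j := by
      simp [Fin.ext_iff, Nat.add_comm]
    simp only [rotEquivL, Equiv.trans_apply, Equiv.sumCongr_apply, Sum.map_inr, this,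
      Fin.succAbove_zero]
    simp

namespace IsRotation

variable {z : ∀ m, Fin (m + 1)} {rot : ∀ k l, (Fin k ⊕ Fin (l + 1)) ≃ (Fin (k + 1) ⊕ Fin l)}

theorem symm_inl_succAbove (hR : IsRotation z rot) (k l : ℕ) (i : Fin k) :
    (rot k l).symm (.inl ((z k).succAbove i)) = .inl i := by
  rw [Equiv.symm_apply_eq, hR.inl]

theorem symm_inl_z (hR : IsRotation z rot) (k l : ℕ) :
    (rot k l).symm (.inl (z k)) = .inr (z l) := by
  rw [Equiv.symm_apply_eq, hR.inr_z]

theorem symm_inr (hR : IsRotation z rot) (k l : ℕ) (j : Fin l) :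
    (rot k l).symm (.inr j) = .inr ((z l).succAbove j) := by
  rw [Equiv.symm_apply_eq, hR.inr_succAbove]

theorem partialTrace_le (hR : IsRotation z rot) (p : PP (k + 1) (k + 1)) :
    partialTrace (z k).succAbove p ≤
      compP ((idP (k + 1)).comap (rot (k + 1) k).symm) (p.comap (rot k (k + 1))) := by
  set q := p.comap (rot k (k + 1))
  set d := (idP (k + 1)).comap (rot (k + 1) k).symm
  let ψ : Fin (k + 1) ⊕ Fin (k + 1) → Fin k ⊕ (Fin (k + 1 + 1) ⊕ Fin k) :=
    Sum.map id Sum.inl ∘ (rot k (k + 1)).symm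
  have h_sup : p ⊔ closing (z k).succAbove ≤ (bigS q d).comap ψ := by
    refine sup_le (fun u v h => ?_) (closing_le_iff.2 fun x hx => ?_)
    · refine le_comap_bigS_left q d ?_
      simpa only [q, Setoid.comap_rel, Equiv.apply_symm_apply] using h
    · obtain rfl : x = z k := by
        by_contra hxz
        exact hx (Fin.exists_succAbove_eq hxz)
      simp only [ψ, Setoid.comap_rel, Function.comp_apply, hR.symm_inl_z, hR.symm_inr, Sum.map_inr]
      refine le_comap_bigS_right q d ?_
      simp only [d, Setoid.comap_rel, idP_apply, hR.symm_inl_z, hR.symm_inl_succAbove,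
        strand_inl, strand_inr]
  have hψ (u : Fin k ⊕ Fin k) :
      bigS q d (ψ (u.map (z k).succAbove (z k).succAbove)) (u.map id Sum.inr) := by
    rcases u with i | i
    · simp only [ψ, Function.comp_apply, Sum.map_inl, hR.symm_inl_succAbove]
      exact Setoid.refl' _ _
    · simp only [ψ, Function.comp_apply, Sum.map_inr, hR.symm_inr]
      refine le_comap_bigS_right q d ?_
      simp only [d, Setoid.comap_rel, idP_apply, hR.symm_inr, hR.symm_inl_succAbove,
        strand_inl, strand_inr]
  intro u v h
  exact (bigS q d).trans' ((bigS q d).symm' (hψ u)) ((bigS q d).trans' (h_sup h) (hψ v))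

theorem le_partialTrace (hR : IsRotation z rot) (p : PP (k + 1) (k + 1)) :
    compP ((idP (k + 1)).comap (rot (k + 1) k).symm) (p.comap (rot k (k + 1))) ≤
      partialTrace (z k).succAbove p := by
  set S := p ⊔ closing (z k).succAbove
  let φ : Fin k ⊕ (Fin (k + 1 + 1) ⊕ Fin k) → Fin (k + 1) ⊕ Fin (k + 1) :=
    Sum.elim (Sum.inl ∘ (z k).succAbove)
      (Sum.elim (rot k (k + 1) ∘ Sum.inr) (Sum.inr ∘ (z k).succAbove))
  have hφ_upper (a : Fin k ⊕ Fin (k + 1 + 1)) : φ (a.map id Sum.inl) = rot k (k + 1) a := by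
    rcases a with i | i
    exacts [(hR.inl _ _ _).symm, rfl]
  have hφ_lower (a : Fin (k + 1 + 1) ⊕ Fin k) :
      S (φ (.inr a)) (.inr (strand ((rot (k + 1) k).symm a))) := by
    rcases a with i | i
    · obtain rfl | ⟨i, rfl⟩ := (z (k + 1)).eq_self_or_eq_succAbove i
      · simp only [φ, Sum.elim_inr, Sum.elim_inl, Function.comp_apply, hR.inr_z, hR.symm_inl_z]
        exact closing_le_iff.1 le_sup_right _ fun ⟨i, hi⟩ => Fin.succAbove_ne _ _ hi
      · simp only [φ, Sum.elim_inr, Sum.elim_inl, Function.comp_apply, hR.inr_succAbove,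
          hR.symm_inl_succAbove]
        exact S.refl' _
    · rw [hR.symm_inr]
      exact S.refl' _
  have h_big : bigS (p.comap (rot k (k + 1))) ((idP (k + 1)).comap (rot (k + 1) k).symm) ≤
      S.comap φ := by
    refine bigS_le_iff.2 ⟨fun a b h => ?_, fun a b h => ?_⟩
    · simp only [Setoid.comap_rel, hφ_upper] at h ⊢
      exact rel_sup_left h
    · have hb := hφ_lower b
      rw [← (idP_apply ..).1 h] at hb
      exact S.trans' (hφ_lower a) (S.symm' hb)
  intro u v h
  rcases u <;> rcases v <;> exact h_big h

theorem partialTrace_succAbove (hR : IsRotation z rot) (p : PP (k + 1) (k + 1)) :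
    partialTrace (z k).succAbove p =
      compP ((idP (k + 1)).comap (rot (k + 1) k).symm) (p.comap (rot k (k + 1))) :=
  (hR.partialTrace_le p).antisymm (hR.le_partialTrace p)

end IsRotation

namespace PartitionCategory

variable (C : PartitionCategory)

theorem idP_succ_mem (k : ℕ) : idP (k + 1) ∈ C.mem (k + 1) (k + 1) := by
  induction k with
  | zero => exact C.id_mem
  | succ k ih =>
    rw [← tensorP_idP]
    exact C.tensor_mem _ _ ih C.id_mem

theorem partialTrace_castSucc_mem {p : PP (k + 1) (k + 1)} (hp : p ∈ C.mem (k + 1) (k + 1)) :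
    partialTrace Fin.castSucc p ∈ C.mem k k := by
  rw [← Fin.succAbove_last, isRotation_rotEquivR.partialTrace_succAbove]
  exact C.comp_mem _ _ (C.rotR_mem' _ (C.idP_succ_mem _)) (C.rotR_mem _ hp)

theorem partialTrace_succ_mem {p : PP (k + 1) (k + 1)} (hp : p ∈ C.mem (k + 1) (k + 1)) :
    partialTrace Fin.succ p ∈ C.mem k k := by
  rw [← Fin.succAbove_zero, isRotation_rotEquivL.partialTrace_succAbove]
  exact C.comp_mem _ _ (C.rotL_mem' _ (C.idP_succ_mem _)) (C.rotL_mem _ hp)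

theorem partialTrace_mem_of_val_eq_add {d : ℕ} {e : Fin k → Fin n} (he : ∀ i, (e i : ℕ) = i + d)
    (hn : k + d ≤ n) {p : PP n n} (hp : p ∈ C.mem n n) : partialTrace e p ∈ C.mem k k := by
  induction n generalizing d with
  | zero =>
    obtain rfl : k = 0 := by lia
    rwa [show e = id from funext fun i => i.elim0, partialTrace_id]
  | succ n ih =>
    obtain hlt | heq : k + d < n + 1 ∨ k + d = n + 1 := hn.lt_or_eq
    · let e' (i : Fin k) : Fin n := ⟨i + d, by lia⟩
      have he_comp : e = Fin.castSucc ∘ e' := funext fun i => Fin.ext (he i)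
      rw [he_comp, ← partialTrace_partialTrace (Fin.castSucc_injective n)]
      exact ih (fun _ => rfl) (by lia) (C.partialTrace_castSucc_mem hp)
    rcases d with _ | d
    · obtain rfl : k = n + 1 := heq
      rwa [show e = id from funext fun i => Fin.ext (he i), partialTrace_id]
    · let e' (i : Fin k) : Fin n := ⟨i + d, by lia⟩
      have he_comp : e = Fin.succ ∘ e' := funext fun i => Fin.ext (he i)
      rw [he_comp, ← partialTrace_partialTrace (Fin.succ_injective n)]
      exact ih (fun _ => rfl) (by lia) (C.partialTrace_succ_mem hp)

theorem partialTrace_castAdd_mem {p : PP (k + m) (k + m)} (hp : p ∈ C.mem (k + m) (k + m)) :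
    partialTrace (Fin.castAdd m) p ∈ C.mem k k :=
  C.partialTrace_mem_of_val_eq_add (e := Fin.castAdd m) (d := 0) (fun _ => rfl)
    (Nat.le_add_right k m) hp

theorem partialTrace_natAdd_mem {p : PP (m + k) (m + k)} (hp : p ∈ C.mem (m + k) (m + k)) :
    partialTrace (Fin.natAdd m) p ∈ C.mem k k :=
  C.partialTrace_mem_of_val_eq_add (e := Fin.natAdd m) (fun i => Nat.add_comm m i)
    (Nat.add_comm k m).le hp

end PartitionCategory

end PartialTrace

section Mixing

variable {k l n : ℕ}

theorem idP_le_iff {t : PP n n} : idP n ≤ t ↔ ∀ i, t (.inl i) (.inr i) := by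
  refine ⟨fun h i => h ((idP_apply _ _).2 rfl), fun h x y hxy => ?_⟩
  have h_inl (x : Fin n ⊕ Fin n) : t x (.inl (strand x)) := by
    rcases x with i | i
    exacts [t.refl' _, t.symm' (h i)]
  have hy := h_inl y
  rw [← (idP_apply x y).1 hxy] at hy
  exact t.trans' (h_inl x) (t.symm' hy)

/-- The blocks of `h` pair strands in `P` with strands outside `P`. This is the property of mixing
partitions that makes their partial traces trivial. -/
structure PairsAcross (P : Set (Fin n)) (h : PP n n) : Prop where
  swapP_eq : swapP h = h
  eq_of_rel : ∀ x y, h x y → (strand x ∈ P ↔ strand y ∈ P) →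
    strand x = strand y
  rel_or_exists : ∀ i, h (.inl i) (.inr i) ∨ ∃ j, (j ∈ P ↔ i ∉ P) ∧ h (.inl i) (.inl j)

namespace PairsAcross

variable {P : Set (Fin n)} {h : PP n n}

theorem compl (hh : PairsAcross P h) : PairsAcross Pᶜ h where
  swapP_eq := hh.swapP_eq
  eq_of_rel x y hxy hP := hh.eq_of_rel x y hxy (not_iff_not.1 hP)
  rel_or_exists i := (hh.rel_or_exists i).imp_right fun ⟨j, hj, hij⟩ => ⟨j, not_congr hj, hij⟩

theorem rel_swap (hh : PairsAcross P h) {x y : Fin n ⊕ Fin n} (hxy : h x y) :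
    h x.swap y.swap := by
  rwa [← swapP_apply, hh.swapP_eq]

theorem partialTrace_le_idP {e : Fin k → Fin n} (he : Function.Injective e)
    (hh : PairsAcross (Set.range e) h) : partialTrace e h ≤ idP k := by
  let T : PP n n :=
    { r := fun x y => h x y ∨ h x y.swap
      iseqv := by
        refine ⟨fun x => .inl (h.refl' x), fun {x y} hxy => ?_, fun {x y z} hxy hyz => ?_⟩
        · refine hxy.imp h.symm' fun hxy => h.symm' ?_
          simpa only [Sum.swap_swap] using hh.rel_swap hxy
        · rcases hxy with hxy | hxy <;> rcases hyz with hyz | hyz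
          · exact .inl (h.trans' hxy hyz)
          · exact .inr (h.trans' hxy hyz)
          · exact .inr (h.trans' hxy (hh.rel_swap hyz))
          · refine .inl (h.trans' hxy ?_)
            simpa only [Sum.swap_swap] using hh.rel_swap hyz }
  have h_le : h ⊔ closing e ≤ T :=
    sup_le (fun _ _ hxy => .inl hxy) (closing_le_iff.2 fun _ _ => .inr (h.refl' _))
  intro x y hxy
  refine (idP_apply x y).2 (he ?_)
  rcases h_le hxy with hxy | hxy
  · simpa only [strand_map, Set.mem_range_self, forall_const] using hh.eq_of_rel _ _ hxy
  · simpa only [strand_swap, strand_map, Set.mem_range_self, forall_const] using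
      hh.eq_of_rel _ _ hxy

theorem idP_le_partialTrace {e : Fin k → Fin n} (hh : PairsAcross (Set.range e) h) :
    idP k ≤ partialTrace e h := by
  refine idP_le_iff.2 fun i => ?_
  obtain hi | ⟨j, hj, hij⟩ := hh.rel_or_exists (e i)
  · exact rel_sup_left hi
  · have hj_notMem : j ∉ Set.range e := fun hj' => hj.1 hj' ⟨i, rfl⟩
    have h_close : (h ⊔ closing e) (.inl j) (.inr j) :=
      closing_le_iff.1 le_sup_right j hj_notMem
    have h_lower : h (.inr j) (.inr (e i)) := hh.rel_swap (h.symm' hij)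
    exact (h ⊔ closing e).trans' (rel_sup_left hij)
      ((h ⊔ closing e).trans' h_close (rel_sup_left h_lower))

theorem partialTrace_eq_idP {e : Fin k → Fin n} (he : Function.Injective e)
    (hh : PairsAcross (Set.range e) h) : partialTrace e h = idP k :=
  (hh.partialTrace_le_idP he).antisymm hh.idP_le_partialTrace

end PairsAcross

theorem isMixing.rel_cases {h : PP (k + l) (k + l)} (hh : isMixing k l h)
    {x y : Fin (k + l) ⊕ Fin (k + l)} (hxy : h x y) :
    strand x = strand y ∨
      ((strand x).val < k ↔ k ≤ (strand y).val) := by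
  obtain ⟨-, h_size, h_two, h_four⟩ := hh
  by_cases hne : x = y
  · exact .inl (by rw [hne])
  obtain hx | hx := h_size x
  · obtain ⟨i, ⟨rfl, rfl⟩ | ⟨rfl, rfl⟩⟩ |
      ⟨i, j, hi, hj, ⟨rfl, rfl⟩ | ⟨rfl, rfl⟩ | ⟨rfl, rfl⟩ | ⟨rfl, rfl⟩⟩ := h_two x y hxy hne hx <;>
      simp only [strand_inl, strand_inr] <;> lia
  · obtain ⟨i, j, hi, hj, h_block⟩ := h_four x hx
    obtain rfl | rfl | rfl | rfl := (h_block x).1 (h.refl' x) <;>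
      obtain rfl | rfl | rfl | rfl := (h_block y).1 hxy <;>
      simp only [strand_inl, strand_inr] <;> lia

theorem isMixing.rel_inl_inr_or_exists {h : PP (k + l) (k + l)} (hh : isMixing k l h)
    (i : Fin (k + l)) :
    h (.inl i) (.inr i) ∨ ∃ j : Fin (k + l), ((j : ℕ) < k ↔ k ≤ (i : ℕ)) ∧ h (.inl i) (.inl j) := by
  obtain ⟨-, h_size, h_two, h_four⟩ := hh
  obtain hi | hi := h_size (.inl i)
  · obtain ⟨y, hy, hne⟩ : ∃ y, h (.inl i) y ∧ Sum.inl i ≠ y := by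
      have : Nontrivial {y // h (.inl i) y} := Finite.one_lt_card_iff_nontrivial.1 (by
        rw [show Nat.card {y // h (.inl i) y} = 2 from hi]; exact one_lt_two)
      obtain ⟨⟨y, hy⟩, hne⟩ := exists_ne (⟨.inl i, h.refl' _⟩ : {y // h (.inl i) y})
      exact ⟨y, hy, fun h_eq => hne (Subtype.ext h_eq.symm)⟩
    obtain ⟨a, ⟨ha, rfl⟩ | ⟨ha, rfl⟩⟩ |
      ⟨a, b, hak, hbk, ⟨ha, rfl⟩ | ⟨ha, rfl⟩ | ⟨ha, rfl⟩ | ⟨ha, rfl⟩⟩ := h_two _ y hy hne hi <;>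
      cases ha
    · exact .inl hy
    · exact .inr ⟨b, by lia, hy⟩
    · exact .inr ⟨a, by lia, hy⟩
  · obtain ⟨a, b, -, -, h_block⟩ := h_four _ hi
    refine .inl ((h_block _).2 ?_)
    obtain h_eq | h_eq | h_eq | h_eq := (h_block _).1 (h.refl' _) <;> cases h_eq
    · exact .inr (.inl rfl)
    · exact .inr (.inr (.inr rfl))

theorem mem_range_castAdd_iff {i : Fin (k + l)} :
    i ∈ Set.range (Fin.castAdd l : Fin k → Fin (k + l)) ↔ (i : ℕ) < k := by
  induction i using Fin.addCases with
  | left i => simp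
  | right i => simp [Fin.ext_iff]; lia

theorem range_natAdd_eq_compl :
    Set.range (Fin.natAdd k : Fin l → Fin (k + l)) = (Set.range (Fin.castAdd l))ᶜ := by
  ext i
  rw [Set.mem_compl_iff, mem_range_castAdd_iff]
  induction i using Fin.addCases with
  | left i => simp [Fin.ext_iff]; lia
  | right i => simp

theorem isMixing.pairsAcross {h : PP (k + l) (k + l)} (hh : isMixing k l h) :
    PairsAcross (Set.range (Fin.castAdd l)) h where
  swapP_eq := hh.1.1
  eq_of_rel x y hxy hP := by
    rw [mem_range_castAdd_iff, mem_range_castAdd_iff] at hP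
    exact (hh.rel_cases hxy).resolve_right (by lia)
  rel_or_exists i := by
    simpa only [mem_range_castAdd_iff, not_lt] using hh.rel_inl_inr_or_exists i

theorem isMixing.partialTrace_castAdd {h : PP (k + l) (k + l)} (hh : isMixing k l h) :
    partialTrace (Fin.castAdd l) h = idP k :=
  hh.pairsAcross.partialTrace_eq_idP (Fin.castAdd_injective k l)

theorem isMixing.partialTrace_natAdd {h : PP (k + l) (k + l)} (hh : isMixing k l h) :
    partialTrace (Fin.natAdd k) h = idP l :=
  PairsAcross.partialTrace_eq_idP (Fin.natAdd_injective l k)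
    (range_natAdd_eq_compl ▸ hh.pairsAcross.compl)

end Mixing

/-- `e` and `g` embed the two rows of `W` in the two rows of `U`, and identify `W` with a union of
blocks of `U`. -/
structure IsBlockEmbedding {k t m n : ℕ} (W : PP k t) (U : PP m n) (e : Fin k → Fin m)
    (g : Fin t → Fin n) : Prop where
  comap_eq : U.comap (Sum.map e g) = W
  mem_range : ∀ x y, U x y → x ∈ Set.range (Sum.map e g) → y ∈ Set.range (Sum.map e g)

namespace IsBlockEmbedding

variable {k t m n : ℕ} {W : PP k t} {U : PP m n} {e : Fin k → Fin m} {g : Fin t → Fin n}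

theorem mem_range_iff (hE : IsBlockEmbedding W U e g) {x y : Fin m ⊕ Fin n} (hxy : U x y) :
    x ∈ Set.range (Sum.map e g) ↔ y ∈ Set.range (Sum.map e g) :=
  ⟨hE.mem_range x y hxy, hE.mem_range y x (U.symm' hxy)⟩

theorem inl_inl_mem_range_iff (hE : IsBlockEmbedding W U e g) {i j : Fin m}
    (hij : U (.inl i) (.inl j)) : i ∈ Set.range e ↔ j ∈ Set.range e := by
  simpa using hE.mem_range_iff hij

theorem inl_inr_mem_range_iff (hE : IsBlockEmbedding W U e g) {i : Fin m} {j : Fin n}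
    (hij : U (.inl i) (.inr j)) : i ∈ Set.range e ↔ j ∈ Set.range g := by
  simpa using hE.mem_range_iff hij

theorem comap_doubleRow (hE : IsBlockEmbedding W U e g) :
    (doubleRow U).comap (Sum.map e e) = doubleRow W := by
  rw [comap_sumMap_sumSetoid, ← hE.comap_eq]
  rfl

theorem of_doubleRow_sup_closing (hE : IsBlockEmbedding W U e g) {x y : Fin m ⊕ Fin m}
    (hxy : (doubleRow U ⊔ closing e) x y) :
    U (.inl (strand x)) (.inl (strand y)) ∧
      (strand x ∈ Set.range e → doubleRow U x y) := by
  let S : PP m m :=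
    { r := fun x y => U (.inl (strand x)) (.inl (strand y)) ∧
        (strand x ∈ Set.range e → doubleRow U x y)
      iseqv :=
        { refl := fun x => ⟨U.refl' _, fun _ => Setoid.refl' _ x⟩
          symm := fun hxy => ⟨U.symm' hxy.1, fun hy =>
            Setoid.symm' _ (hxy.2 ((hE.inl_inl_mem_range_iff hxy.1).2 hy))⟩
          trans := fun hxy hyz => ⟨U.trans' hxy.1 hyz.1, fun hx =>
            Setoid.trans' _ (hxy.2 hx) (hyz.2 ((hE.inl_inl_mem_range_iff hxy.1).1 hx))⟩ } }
  have h_le : doubleRow U ⊔ closing e ≤ S :=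
    sup_le (fun _ _ h => ⟨rel_of_doubleRow h, fun _ => h⟩)
      (closing_le_iff.2 fun i hi => ⟨U.refl' _, fun hi' => (hi hi').elim⟩)
  exact h_le hxy

variable {F : Fin n → Fin m} {f : Fin t → Fin k}

theorem transversal_mem_range_iff (hE : IsBlockEmbedding W U e g) (hF : IsTransversal U F)
    {i : Fin n} : F i ∈ Set.range e ↔ i ∈ Set.range g :=
  hE.inl_inr_mem_range_iff (hF.rel i)

theorem comap_doubleRow_sup_closing_le (hE : IsBlockEmbedding W U e g) (hF : IsTransversal U F) :
    (doubleRow U ⊔ closing e).comap (Sum.map F F) ≤ closing g := by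
  intro s s' hss'
  obtain ⟨h_rel, h_row⟩ := hE.of_doubleRow_sup_closing hss'
  have h_closing (i : Fin n) (h : F i ∉ Set.range e) : closing g (.inl i) (.inr i) :=
    closing_le_iff.1 le_rfl i fun hi => h ((hE.transversal_mem_range_iff hF).2 hi)
  have h_inj {i j : Fin n} (hij : U (.inl (F i)) (.inl (F j))) : i = j :=
    hF.inj i j (U.trans' (U.symm' (hF.rel i)) (hF.rel_inl_iff.1 hij))
  rcases s with i | i <;> rcases s' with j | j <;> obtain rfl : i = j := h_inj h_rel
  · exact Setoid.refl' _ _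
  · exact h_closing i fun hi => not_sumSetoid_inl_inr _ _ _ _ (h_row hi)
  · exact Setoid.symm' _ (h_closing i fun hi => not_sumSetoid_inr_inl _ _ _ _ (h_row hi))
  · exact Setoid.refl' _ _

theorem exists_of_doubleRow_sup_closing (hE : IsBlockEmbedding W U e g)
    (hF : IsTransversal U F) (hf : e ∘ f = F ∘ g) {x : Fin k ⊕ Fin k}
    {s : Fin n ⊕ Fin n} (h : (doubleRow U ⊔ closing e) (x.map e e) (s.map F F)) :
    ∃ s', s = Sum.map g g s' ∧ doubleRow W x (Sum.map f f s') := by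
  obtain ⟨h_rel, h_row⟩ := hE.of_doubleRow_sup_closing h
  have h_base : strand (x.map e e) ∈ Set.range e := ⟨strand x, (strand_map e x).symm⟩
  have h_mem : strand (s.map F F) ∈ Set.range e :=
    (hE.inl_inl_mem_range_iff h_rel).1 h_base
  obtain ⟨s', rfl⟩ : ∃ s', s = Sum.map g g s' := by
    rcases s with i | i <;> obtain ⟨i, rfl⟩ := (hE.transversal_mem_range_iff hF).1 h_mem
    exacts [⟨.inl i, rfl⟩, ⟨.inr i, rfl⟩]
  refine ⟨s', rfl, ?_⟩
  rw [← hE.comap_doubleRow, Setoid.comap_rel, Sum.map_map, hf, ← Sum.map_map]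
  exact h_row h_base

theorem partialTrace_conjP_le (hE : IsBlockEmbedding W U e g) (hF : IsTransversal U F)
    (hfW : IsTransversal W f) (hf : e ∘ f = F ∘ g) (h : PP n n) :
    partialTrace e (conjP U h) ≤ conjP W (partialTrace g h) := by
  intro x y hxy
  rw [partialTrace, hF.conjP_eq_sup, sup_right_comm, Setoid.comap_rel, sup_map_apply] at hxy
  rw [hfW.conjP_apply]
  rcases hxy with hxy | ⟨s, s', hs, hss', hs'⟩
  · have h_base : strand (x.map e e) ∈ Set.range e := ⟨strand x, (strand_map e x).symm⟩
    refine .inl ?_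
    rw [← hE.comap_doubleRow]
    exact (hE.of_doubleRow_sup_closing hxy).2 h_base
  · obtain ⟨s, rfl, hxs⟩ := hE.exists_of_doubleRow_sup_closing hF hf hs
    obtain ⟨s', rfl, hys'⟩ := hE.exists_of_doubleRow_sup_closing hF hf (Setoid.symm' _ hs')
    refine .inr ⟨s, s', hxs, ?_, Setoid.symm' _ hys'⟩
    exact sup_le (le_sup_of_le_right (hE.comap_doubleRow_sup_closing_le hF)) le_sup_left hss'

theorem le_partialTrace_conjP (hE : IsBlockEmbedding W U e g) (hF : IsTransversal U F)
    (hfW : IsTransversal W f) (hf : e ∘ f = F ∘ g) (h : PP n n) :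
    conjP W (partialTrace g h) ≤ partialTrace e (conjP U h) := by
  have h_conj := hF.conjP_le_iff.1 (le_sup_left : conjP U h ≤ conjP U h ⊔ closing e)
  have h_closing : closing g ≤ (conjP U h ⊔ closing e).comap (Sum.map F F) :=
    closing_le_iff.2 fun i hi => closing_le_iff.1 le_sup_right (F i)
      fun hFi => hi ((hE.transversal_mem_range_iff hF).1 hFi)
  refine hfW.conjP_le_iff.2 ⟨?_, fun s s' hss' => ?_⟩
  · rw [← hE.comap_doubleRow]
    exact fun x y hxy => h_conj.1 hxy
  · rw [Setoid.comap_rel, Setoid.comap_rel, Sum.map_map, Sum.map_map, hf, ← Sum.map_map,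
      ← Sum.map_map]
    exact sup_le h_conj.2 h_closing hss'

theorem partialTrace_conjP (hE : IsBlockEmbedding W U e g) (hF : IsTransversal U F)
    (hfW : IsTransversal W f) (hf : e ∘ f = F ∘ g) (h : PP n n) :
    partialTrace e (conjP U h) = conjP W (partialTrace g h) :=
  (hE.partialTrace_conjP_le hF hfW hf h).antisymm (hE.le_partialTrace_conjP hF hfW hf h)

end IsBlockEmbedding

section Legs

variable {k l k' l' : ℕ} {U : PP k l} {U' : PP k' l'}

theorem isBlockEmbedding_castAdd (U : PP k l) (U' : PP k' l') :
    IsBlockEmbedding U (tensorP U U') (Fin.castAdd k') (Fin.castAdd l') where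
  comap_eq := Setoid.ext fun x y => tensorP_castAdd_castAdd U U' x y
  mem_range := by
    rintro _ y hxy ⟨x, rfl⟩
    obtain ⟨y, rfl⟩ | ⟨y, rfl⟩ := eq_map_castAdd_or_eq_map_natAdd y
    · exact ⟨y, rfl⟩
    · exact (not_tensorP_castAdd_natAdd U U' x y hxy).elim

theorem isBlockEmbedding_natAdd (U : PP k l) (U' : PP k' l') :
    IsBlockEmbedding U' (tensorP U U') (Fin.natAdd k) (Fin.natAdd l) where
  comap_eq := Setoid.ext fun x y => tensorP_natAdd_natAdd U U' x y
  mem_range := by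
    rintro _ y hxy ⟨x, rfl⟩
    obtain ⟨y, rfl⟩ | ⟨y, rfl⟩ := eq_map_castAdd_or_eq_map_natAdd y
    · exact (not_tensorP_natAdd_castAdd U U' y x hxy).elim
    · exact ⟨y, rfl⟩

variable {f : Fin l → Fin k} {f' : Fin l' → Fin k'} {h : PP (l + l') (l + l')}

theorem partialTrace_castAdd_mixP (hf : IsTransversal U f) (hf' : IsTransversal U' f')
    (hh : isMixing l l' h) :
    partialTrace (Fin.castAdd k') (mixP U U' h) = conjP U (idP l) := by
  rw [mixP_eq_conjP, (isBlockEmbedding_castAdd U U').partialTrace_conjP (hf.tensorP hf') hf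
    (by ext; simp), hh.partialTrace_castAdd]

theorem partialTrace_natAdd_mixP (hf : IsTransversal U f) (hf' : IsTransversal U' f')
    (hh : isMixing l l' h) :
    partialTrace (Fin.natAdd k) (mixP U U' h) = conjP U' (idP l') := by
  rw [mixP_eq_conjP, (isBlockEmbedding_natAdd U U').partialTrace_conjP (hf.tensorP hf') hf'
    (by ext; simp), hh.partialTrace_natAdd]

end Legs

namespace isBuilding

variable {k l : ℕ} {U V : PP k l}

theorem exists_isLeast (hU : isBuilding U) :
    ∃ f : Fin l → Fin k, StrictMono f ∧ ∀ i, IsLeast {x | U (.inl x) (.inr i)} (f i) := by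
  have h_least (i : Fin l) : ∃ x, IsLeast {x | U (.inl x) (.inr i)} x :=
    ⟨_, wellFounded_lt.min_mem _ (hU.2.1 i), fun _ hx => wellFounded_lt.min_le hx⟩
  choose f hf using h_least
  exact ⟨f, fun i j hij => hU.2.2 i j _ _ hij (hf i) (hf j), hf⟩

theorem isTransversal (hU : isBuilding U) {f : Fin l → Fin k}
    (hf : ∀ i, IsLeast {x | U (.inl x) (.inr i)} (f i)) : IsTransversal U f :=
  ⟨fun i => (hf i).1, hU.1⟩

theorem exists_isTransversal (hU : isBuilding U) : ∃ f, IsTransversal U f :=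
  hU.exists_isLeast.imp fun _ hf => hU.isTransversal hf.2

theorem range_eq (hU : isBuilding U) {f : Fin l → Fin k}
    (hf : ∀ i, IsLeast {x | U (.inl x) (.inr i)} (f i)) :
    Set.range f = {x | conjP U (idP l) (.inl x) (.inr x) ∧
      ∀ y, conjP U (idP l) (.inl x) (.inl y) → x ≤ y} := by
  ext x
  simp only [(hU.isTransversal hf).conjP_idP_inl_inl, (hU.isTransversal hf).conjP_idP_inl_inr,
    and_self, Set.mem_range, Set.mem_ofPred_eq]
  constructor
  · rintro ⟨i, rfl⟩
    exact ⟨⟨i, (hf i).1⟩, fun y hy => (hf i).2 (U.trans' (U.symm' hy) (hf i).1)⟩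
  · rintro ⟨⟨i, hi⟩, hx⟩
    exact ⟨i, ((hf i).2 hi).antisymm (hx _ (U.trans' hi (U.symm' (hf i).1)))⟩

theorem eq_of_conjP_idP_eq (hU : isBuilding U) (hV : isBuilding V)
    (hUV : conjP U (idP l) = conjP V (idP l)) : U = V := by
  obtain ⟨f, hf_mono, hf⟩ := hU.exists_isLeast
  obtain ⟨g, hg_mono, hg⟩ := hV.exists_isLeast
  obtain rfl : f = g := by
    rw [← hf_mono.range_inj hg_mono, hU.range_eq hf, hV.range_eq hg, hUV]
  have hfU := hU.isTransversal hf
  have hfV := hV.isTransversal hg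
  have h_upper (x y) : U (.inl x) (.inl y) ↔ V (.inl x) (.inl y) := by
    rw [← hfU.conjP_idP_inl_inl, ← hfV.conjP_idP_inl_inl, hUV]
  have h_through (x i) : U (.inl x) (.inr i) ↔ V (.inl x) (.inr i) := by
    rw [← hfU.rel_inl_iff, ← hfV.rel_inl_iff, h_upper]
  ext (x | i) (y | j)
  · exact h_upper x y
  · exact h_through x j
  · rw [Setoid.comm' U, Setoid.comm' V, h_through]
  · constructor <;> intro hij
    · rw [hfU.inj i j hij]
    · rw [hfV.inj i j hij]

end isBuilding

/-- properties of the mixing operation `l ∗_h r`: (1) if `l ∗_h r` belongs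
to a category of partitions then so do `l` and `r`; (2) the assignment `(l,r,h) ↦ l ∗_h r`
is injective; (3) `l ∗_h r ⪯ l ⊗ r`. -/
theorem mixing_star_properties {a b : ℕ} (l : PP a a) (r : PP b b)
    (hl : isProjective l) (hr : isProjective r)
    (lu : PP a (tP l)) (hlu : isBuilding lu) (hld : l = compP (swapP lu) lu)
    (ru : PP b (tP r)) (hru : isBuilding ru) (hrd : r = compP (swapP ru) ru)
    (h : PP (tP l + tP r) (tP l + tP r)) (hh : isMixing (tP l) (tP r) h) :
    (∀ C : PartitionCategory, mixP lu ru h ∈ C.mem (a + b) (a + b) →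
      l ∈ C.mem a a ∧ r ∈ C.mem b b) ∧
    (∀ (l' : PP a a) (r' : PP b b), isProjective l' → isProjective r' →
      ∀ (lu' : PP a (tP l')) (ru' : PP b (tP r')),
        isBuilding lu' → l' = compP (swapP lu') lu' →
        isBuilding ru' → r' = compP (swapP ru') ru' →
      ∀ h' : PP (tP l' + tP r') (tP l' + tP r'), isMixing (tP l') (tP r') h' →
        mixP lu ru h = mixP lu' ru' h' → l = l' ∧ r = r' ∧ HEq h h') ∧
    compP (tensorP l r) (mixP lu ru h) = mixP lu ru h := by
  obtain ⟨f, hf⟩ := hlu.exists_isTransversal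
  obtain ⟨g, hg⟩ := hru.exists_isTransversal
  rw [← conjP_idP] at hld hrd
  have hl_trace := (partialTrace_castAdd_mixP hf hg hh).trans hld.symm
  have hr_trace := (partialTrace_natAdd_mixP hf hg hh).trans hrd.symm
  refine ⟨fun C hC => ⟨hl_trace ▸ C.partialTrace_castAdd_mem hC,
    hr_trace ▸ C.partialTrace_natAdd_mem hC⟩, ?_, ?_⟩
  · intro l' r' _ _ lu' ru' hlu' hld' hru' hrd' h' hh' h_eq
    obtain ⟨f', hf'⟩ := hlu'.exists_isTransversal
    obtain ⟨g', hg'⟩ := hru'.exists_isTransversal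
    rw [← conjP_idP] at hld' hrd'
    obtain rfl : l = l' := by
      rw [← hl_trace, h_eq, partialTrace_castAdd_mixP hf' hg' hh', ← hld']
    obtain rfl : r = r' := by
      rw [← hr_trace, h_eq, partialTrace_natAdd_mixP hf' hg' hh', ← hrd']
    obtain rfl := hlu.eq_of_conjP_idP_eq hlu' (hld.symm.trans hld')
    obtain rfl := hru.eq_of_conjP_idP_eq hru' (hrd.symm.trans hrd')
    rw [mixP_eq_conjP, mixP_eq_conjP] at h_eq
    exact ⟨rfl, rfl, heq_of_eq ((hf.tensorP hg).conjP_injective h_eq)⟩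
  · have h_tensor : tensorP l r = conjP (tensorP lu ru) (idP _) := by
      rw [← tensorP_conjP_idP, ← hld, ← hrd]
    rw [h_tensor, mixP_eq_conjP, (hf.tensorP hg).compP_conjP_idP_conjP]
end

section
/- The only noncrossing (k,l)-mixing partitions are the partitions h̃^a_□ (a nested increasing inclusion of a blocks of size 2 in each row, placed between identities) for 0 ≤ a ≤ min(k,l), and h̃^a_⊡ (the same with the outermost upper and lower pairs joined into one block of size 4) for 1 ≤ a ≤ min(k,l). Consequently, for projective partitions p, q, t(p □^a q) = t(p) + t(q) − 2a and t(p ⊡^a q) = t(p) + t(q) + 1 − 2a. -/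
/-- Distance of a position to the boundary between the first `k` and the last `l` points. -/
def mixDepth (k l : ℕ) (x : Fin (k + l)) : ℕ :=
  if (x : ℕ) < k then k - 1 - (x : ℕ) else (x : ℕ) - k

/-- Block labels for the noncrossing mixing partition `h̃^a_□` : the `a` nested pairs
around the boundary in each row, and identity strings elsewhere. -/
def hsqLabel (k l a : ℕ) : (Fin (k + l) ⊕ Fin (k + l)) → (ℕ ⊕ (ℕ × Bool))
  | Sum.inl x => if mixDepth k l x < a then Sum.inr (mixDepth k l x, true) else Sum.inl (x : ℕ)
  | Sum.inr x => if mixDepth k l x < a then Sum.inr (mixDepth k l x, false) else Sum.inl (x : ℕ)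

/-- The noncrossing mixing partition `h̃^a_□`. -/
def hsq (k l a : ℕ) : PP (k + l) (k + l) := Setoid.ker (hsqLabel k l a)

/-- Block labels for `h̃^a_⊡` : as for `h̃^a_□`, but the outermost upper and lower pairs
are joined into one block of size 4. -/
def hboxLabel (k l a : ℕ) : (Fin (k + l) ⊕ Fin (k + l)) → (ℕ ⊕ (ℕ × Bool))
  | Sum.inl x => if mixDepth k l x + 1 < a then Sum.inr (mixDepth k l x, true)
      else if mixDepth k l x + 1 = a then Sum.inr (mixDepth k l x, true) else Sum.inl (x : ℕ)
  | Sum.inr x => if mixDepth k l x + 1 < a then Sum.inr (mixDepth k l x, false)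
      else if mixDepth k l x + 1 = a then Sum.inr (mixDepth k l x, true) else Sum.inl (x : ℕ)

/-- The noncrossing mixing partition `h̃^a_⊡`. -/
def hbox (k l a : ℕ) : PP (k + l) (k + l) := Setoid.ker (hboxLabel k l a)

/-!
A symmetric partition is projective exactly when each of its through-blocks contains a vertical
pair `(x, x')`. In a noncrossing mixing partition two points of a row in the same block lie on
opposite sides of the boundary. No string beneath such an arc can leave it, so the points there
are paired among themselves, each with one on the other side; counting both sides shows that the
arc joins mirror images. Hence the depths of the paired points form an initial segment `[0, a)`
and those of the points not on through-blocks an initial segment `[0, b)`. A paired point strictly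
beneath another arc lies on no through-block, so `b ≤ a ≤ b + 1`, which gives `h̃^a_□` for `b = a`
and `h̃^a_⊡` for `b = a - 1`.

For the count, the through-blocks of `(p_u* ⊗ q_u*) h (p_u ⊗ q_u)` correspond to those of `h`,
since the through-labels of `p_u ⊗ q_u` lie in distinct blocks that all reach the upper row.
-/

theorem exists_le_forall_iff_lt {ι : Type*} {δ : ι → ℕ} {P : ι → Prop} {N : ℕ}
    (hP : ∀ x z, P x → δ z ≤ δ x → P z) (hN : ∀ x, P x → δ x < N) :
    ∃ a ≤ N, ∀ x, P x ↔ δ x < a := by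
  classical
  have hbound : ∃ a, ∀ x, P x → δ x < a := ⟨N, hN⟩
  refine ⟨Nat.find hbound, Nat.find_min' hbound hN, fun x => ⟨Nat.find_spec hbound x, fun hx => ?_⟩⟩
  have hnot := Nat.find_min hbound hx
  push Not at hnot
  obtain ⟨z, hz, hxz⟩ := hnot
  exact hP z x hz hxz

theorem isNC.rel {n m : ℕ} {p : PP n m} (hp : isNC p) {u v w z : Fin n ⊕ Fin m}
    (huv : posP n m u < posP n m v) (hvw : posP n m v < posP n m w)
    (hwz : posP n m w < posP n m z) (huw : p.r u w) (hvz : p.r v z) : p.r u v :=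
  by_contra fun huv' => hp ⟨u, v, w, z, huv, hvw, hwz, huw, hvz, huv'⟩

section Composition

variable {k l m : ℕ} {p : PP k l} {q : PP l m}

theorem compP_inl_inl {x y : Fin k} (h : p.r (.inl x) (.inl y)) :
    (compP q p).r (.inl x) (.inl y) :=
  .rel _ _ (.inl ⟨_, _, h, rfl, rfl⟩)

theorem compP_inr_inr {x y : Fin m} (h : q.r (.inr x) (.inr y)) :
    (compP q p).r (.inr x) (.inr y) :=
  .rel _ _ (.inr ⟨_, _, h, rfl, rfl⟩)

theorem compP_inl_inr {x : Fin k} {y : Fin l} {z : Fin m} (hp : p.r (.inl x) (.inr y))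
    (hq : q.r (.inl y) (.inr z)) : (compP q p).r (.inl x) (.inr z) :=
  .trans _ (.inr (.inl y)) _ (.rel _ _ (.inl ⟨_, _, hp, rfl, rfl⟩))
    (.rel _ _ (.inr ⟨_, _, hq, rfl, rfl⟩))

theorem compP_le_ker {γ : Type*} {f : Fin k → γ} {g : Fin l → γ} {e : Fin m → γ}
    (hp : p ≤ Setoid.ker (Sum.elim f g)) (hq : q ≤ Setoid.ker (Sum.elim g e)) :
    compP q p ≤ Setoid.ker (Sum.elim f e) := by
  have hbig : bigS p q ≤ Setoid.ker (Sum.elim f (Sum.elim g e)) := by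
    apply Setoid.eqvGen_le
    rintro _ _ (⟨u, v, huv, rfl, rfl⟩ | ⟨u, v, huv, rfl, rfl⟩)
    · rcases u with u | u <;> rcases v with v | v <;> exact hp huv
    · exact hq huv
  rintro (x | x) (y | y) hxy <;> exact hbig hxy

end Composition

theorem swapP_le_ker {k l : ℕ} {γ : Type*} {p : PP k l} {f : Fin k → γ} {g : Fin l → γ}
    (h : p ≤ Setoid.ker (Sum.elim f g)) : swapP p ≤ Setoid.ker (Sum.elim g f) := by
  rintro (x | x) (y | y) hxy <;> exact h hxy

section Projective

variable {n : ℕ} {p q : PP n n}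

theorem rel_swap_iff (hp : swapP p = p) (u v : Fin n ⊕ Fin n) :
    p.r u.swap v.swap ↔ p.r u v := by
  conv_rhs => rw [← hp]
  rfl

theorem inl_rel_inr_iff (hv : ∀ x y, p.r (.inl x) (.inr y) → p.r (.inl x) (.inr x))
    (hs : swapP p = p) (x y : Fin n) :
    p.r (.inl x) (.inr y) ↔ p.r (.inl x) (.inl y) ∧ p.r (.inl x) (.inr x) := by
  constructor
  · intro hxy
    have hyx : p.r (.inl y) (.inr x) := (rel_swap_iff hs _ _).1 (p.symm hxy)
    exact ⟨p.trans hxy (p.symm (hv y x hyx)), hv x y hxy⟩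
  · rintro ⟨hxy, hx⟩
    exact p.trans hx ((rel_swap_iff hs _ _).2 hxy)

theorem eq_of_upper_of_through (hp : swapP p = p) (hq : swapP q = q)
    (hu : ∀ x y, p.r (.inl x) (.inl y) ↔ q.r (.inl x) (.inl y))
    (ht : ∀ x y, p.r (.inl x) (.inr y) ↔ q.r (.inl x) (.inr y)) : p = q := by
  ext u v
  rcases u with x | x <;> rcases v with y | y
  · exact hu x y
  · exact ht x y
  · rw [← rel_swap_iff hp, ← rel_swap_iff hq]
    exact ht x y
  · rw [← rel_swap_iff hp, ← rel_swap_iff hq]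
    exact hu x y

/-- The label of the point `x` in row `i` of a stack of rows joined by copies of `p`: its block in
the upper row of `p`, together with the row unless that block is a through-block. -/
noncomputable def rowLabel (p : PP n n) (i : Fin 3) (x : Fin n) : Quotient p × Option (Fin 3) :=
  open Classical in (Quotient.mk p (.inl x), if p.r (.inl x) (.inr x) then none else some i)

theorem rowLabel_eq_iff {i j : Fin 3} {x y : Fin n} :
    rowLabel p i x = rowLabel p j y ↔
      p.r (.inl x) (.inl y) ∧
        ((p.r (.inl x) (.inr x) ↔ p.r (.inl y) (.inr y)) ∧ (p.r (.inl x) (.inr x) ∨ i = j)) := by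
  have hq : Quotient.mk p (.inl x) = Quotient.mk p (.inl y) ↔ p.r (.inl x) (.inl y) := Quotient.eq
  simp only [rowLabel, Prod.mk.injEq, hq]
  split_ifs <;> simp_all

theorem eq_ker_rowLabel (hs : swapP p = p)
    (hv : ∀ x y, p.r (.inl x) (.inr y) → p.r (.inl x) (.inr x)) {i j : Fin 3} (hij : i ≠ j) :
    p = Setoid.ker (Sum.elim (rowLabel p i) (rowLabel p j)) := by
  have through_congr {x y : Fin n} (hxy : p.r (.inl x) (.inl y)) :
      p.r (.inl x) (.inr x) ↔ p.r (.inl y) (.inr y) :=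
    ⟨fun hx => hv y x (p.trans (p.symm hxy) hx), fun hy => hv x y (p.trans hxy hy)⟩
  have same_row (i : Fin 3) (x y : Fin n) :
      p.r (.inl x) (.inl y) ↔ rowLabel p i x = rowLabel p i y := by
    rw [rowLabel_eq_iff]
    exact ⟨fun hxy => ⟨hxy, through_congr hxy, .inr rfl⟩, And.left⟩
  have distinct_rows {i j : Fin 3} (hij : i ≠ j) (x y : Fin n) :
      p.r (.inl x) (.inr y) ↔ rowLabel p i x = rowLabel p j y := by
    rw [rowLabel_eq_iff, inl_rel_inr_iff hv hs, or_iff_left hij]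
    exact ⟨fun h => ⟨h.1, through_congr h.1, h.2⟩, fun h => ⟨h.1, h.2.2⟩⟩
  ext u v
  rcases u with x | x <;> rcases v with y | y
  · exact same_row i x y
  · exact distinct_rows hij x y
  · exact (rel_swap_iff hs _ _).symm.trans (distinct_rows hij.symm x y)
  · exact (rel_swap_iff hs _ _).symm.trans (same_row j x y)

theorem isProjective_iff :
    isProjective p ↔
      swapP p = p ∧ ∀ x y, p.r (.inl x) (.inr y) → p.r (.inl x) (.inr x) := by
  refine and_congr_right fun hs => ⟨fun hi x y hxy => ?_, fun hv => le_antisymm ?_ ?_⟩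
  · have hyx : p.r (.inl y) (.inr x) := (rel_swap_iff hs _ _).1 (p.symm hxy)
    rw [← hi]
    exact compP_inl_inr hxy hyx
  · have hle {i j : Fin 3} (hij : i ≠ j) := (eq_ker_rowLabel hs hv hij).le
    calc compP p p ≤ Setoid.ker (Sum.elim (rowLabel p 0) (rowLabel p 2)) :=
          compP_le_ker (hle (by decide : (0 : Fin 3) ≠ 1)) (hle (by decide))
      _ = p := (eq_ker_rowLabel hs hv (by decide)).symm
  · rintro (x | x) (y | y) hxy
    · exact compP_inl_inl hxy
    · exact compP_inl_inr (hv x y hxy) hxy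
    · exact (compP p p).symm (compP_inl_inr (hv y x (p.symm hxy)) (p.symm hxy))
    · exact compP_inr_inr hxy

end Projective

section ThroughBlocks

/-- The through-blocks of `p`, counted by `tP p`. -/
abbrev ThroughBlock {n m : ℕ} (p : PP n m) : Type :=
  {c : Quotient p // (∃ x, Quotient.mk p (.inl x) = c) ∧ ∃ y, Quotient.mk p (.inr y) = c}

/-- `f` picks exactly one upper point from every through-block of `p`. -/
structure IsThroughTransversal {n m : ℕ} {ι : Type*} (p : PP n m) (f : ι → Fin n) : Prop where
  eq_of_rel : ∀ i j, p.r (.inl (f i)) (.inl (f j)) → i = j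
  through : ∀ i, ∃ y, p.r (.inl (f i)) (.inr y)
  exists_rel : ∀ x y, p.r (.inl x) (.inr y) → ∃ i, p.r (.inl x) (.inl (f i))

theorem IsThroughTransversal.tP_eq_card {n m : ℕ} {ι : Type*} {p : PP n m} {f : ι → Fin n}
    (hf : IsThroughTransversal p f) : tP p = Nat.card ι := by
  let block (i : ι) : ThroughBlock p := ⟨Quotient.mk p (.inl (f i)), ⟨f i, rfl⟩,
    (hf.through i).imp fun _ hy => Quotient.sound (p.symm hy)⟩
  refine (Nat.card_congr (Equiv.ofBijective block ⟨fun i j hij => ?_, ?_⟩)).symm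
  · exact hf.eq_of_rel i j (Quotient.exact (congrArg Subtype.val hij))
  · rintro ⟨_, ⟨x, rfl⟩, y, hy⟩
    obtain ⟨i, hi⟩ := hf.exists_rel x y (p.symm (Quotient.exact hy))
    exact ⟨i, Subtype.ext (Quotient.sound (p.symm hi))⟩

theorem exists_isThroughTransversal {n m : ℕ} (p : PP n m) :
    ∃ f : Fin (tP p) → Fin n, IsThroughTransversal p f := by
  let e : ThroughBlock p ≃ Fin (tP p) := Finite.equivFin _
  choose f hf using fun c : ThroughBlock p => c.2.1
  refine ⟨f ∘ e.symm, fun i j hij => ?_, fun i => ?_, fun x y hxy => ?_⟩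
  · apply e.symm.injective
    apply Subtype.ext
    rw [← hf, ← hf]
    exact Quotient.sound hij
  · obtain ⟨y, hy⟩ := (e.symm i).2.2
    exact ⟨y, Quotient.exact ((hf _).trans hy.symm)⟩
  · let c : ThroughBlock p := ⟨Quotient.mk p (.inl x), ⟨x, rfl⟩, y, Quotient.sound (p.symm hxy)⟩
    refine ⟨e c, Quotient.exact ?_⟩
    rw [Function.comp_apply, e.symm_apply_apply, hf]

/-- The lower points of `T` lie in distinct through-blocks, so they label through-blocks of the
upper row. These are the building partitions without the condition on the order of the labels. -/
structure IsThroughLabelling {m s : ℕ} (T : PP m s) : Prop where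
  eq_of_rel : ∀ b c : Fin s, T.r (.inr b) (.inr c) → b = c
  exists_rel : ∀ b : Fin s, ∃ a : Fin m, T.r (.inl a) (.inr b)

theorem isThroughLabelling_of_isBuilding {m s : ℕ} {T : PP m s} (hT : isBuilding T) :
    IsThroughLabelling T :=
  ⟨hT.1, hT.2.1⟩

@[simp]
theorem tensorEquiv_inl_castAdd {m s n t : ℕ} (x : Fin m) :
    tensorEquiv m s n t (.inl (Fin.castAdd n x)) = .inl (.inl x) := by
  simp [tensorEquiv]

@[simp]
theorem tensorEquiv_inl_natAdd {m s n t : ℕ} (x : Fin n) :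
    tensorEquiv m s n t (.inl (Fin.natAdd m x)) = .inr (.inl x) := by
  simp [tensorEquiv]

@[simp]
theorem tensorEquiv_inr_castAdd {m s n t : ℕ} (x : Fin s) :
    tensorEquiv m s n t (.inr (Fin.castAdd t x)) = .inl (.inr x) := by
  simp [tensorEquiv]

@[simp]
theorem tensorEquiv_inr_natAdd {m s n t : ℕ} (x : Fin t) :
    tensorEquiv m s n t (.inr (Fin.natAdd s x)) = .inr (.inr x) := by
  simp [tensorEquiv]

theorem IsThroughLabelling.tensorP {m n s t : ℕ} {T : PP m s} {S : PP n t}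
    (hT : IsThroughLabelling T) (hS : IsThroughLabelling S) :
    IsThroughLabelling (tensorP T S) where
  eq_of_rel b c hbc := by
    change Sum.LiftRel T.r S.r _ _ at hbc
    induction b using Fin.addCases <;> induction c using Fin.addCases <;>
      simp only [tensorEquiv_inr_castAdd, tensorEquiv_inr_natAdd, Sum.liftRel_inl_inl,
        Sum.liftRel_inr_inr, Sum.not_liftRel_inl_inr, Sum.not_liftRel_inr_inl] at hbc
    · rw [hT.eq_of_rel _ _ hbc]
    · rw [hS.eq_of_rel _ _ hbc]
  exists_rel b := by
    change ∃ a, Sum.LiftRel T.r S.r _ _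
    induction b using Fin.addCases with
    | left b =>
      obtain ⟨a, ha⟩ := hT.exists_rel b
      exact ⟨Fin.castAdd n a, by simpa using ha⟩
    | right b =>
      obtain ⟨a, ha⟩ := hS.exists_rel b
      exact ⟨Fin.natAdd m a, by simpa using ha⟩

theorem tensorP_swapP {m n s t : ℕ} (T : PP m s) (S : PP n t) :
    tensorP (swapP T) (swapP S) = swapP (tensorP T S) := by
  have hswap (u : Fin (s + t) ⊕ Fin (m + n)) :
      tensorEquiv m s n t u.swap = (tensorEquiv s m t n u).map Sum.swap Sum.swap := by
    rcases u with x | x <;> induction x using Fin.addCases <;> simp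
  ext u v
  change Sum.LiftRel _ _ _ _ ↔ Sum.LiftRel _ _ (tensorEquiv m s n t u.swap)
    (tensorEquiv m s n t v.swap)
  rw [hswap, hswap]
  rcases tensorEquiv s m t n u with _ | _ <;> rcases tensorEquiv s m t n v with _ | _ <;>
    simp only [Sum.map_inl, Sum.map_inr, Sum.liftRel_inl_inl, Sum.liftRel_inr_inr,
      Sum.not_liftRel_inl_inr, Sum.not_liftRel_inr_inl] <;> rfl

theorem IsThroughLabelling.exists_extension {m s : ℕ} {γ : Type*} {T : PP m s}
    (hT : IsThroughLabelling T) (f : Fin s → γ) (d : γ) :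
    ∃ g : Fin m → γ, T ≤ Setoid.ker (Sum.elim g f) ∧
      ∀ x, (∀ b, ¬ T.r (.inl x) (.inr b)) → g x = d := by
  classical
  let g (x : Fin m) : γ := if hx : ∃ b, T.r (.inl x) (.inr b) then f hx.choose else d
  have g_of_rel {x b} (hxb : T.r (.inl x) (.inr b)) : g x = f b := by
    have hx : ∃ b, T.r (.inl x) (.inr b) := ⟨b, hxb⟩
    simp only [g, dif_pos hx, hT.eq_of_rel _ _ (T.trans (T.symm hx.choose_spec) hxb)]
  have g_of_not {x} (hx : ∀ b, ¬ T.r (.inl x) (.inr b)) : g x = d := dif_neg (by simpa using hx)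
  refine ⟨g, ?_, fun x => g_of_not⟩
  rintro (x | b) (y | c) huv
  · change g x = g y
    by_cases hx : ∃ b, T.r (.inl x) (.inr b)
    · obtain ⟨b, hb⟩ := hx
      rw [g_of_rel hb, g_of_rel (T.trans (T.symm huv) hb)]
    · rw [not_exists] at hx
      rw [g_of_not hx, g_of_not fun b hb => hx b (T.trans huv hb)]
  · exact g_of_rel huv
  · exact (g_of_rel (T.symm huv)).symm
  · exact congrArg f (hT.eq_of_rel _ _ huv)

theorem IsThroughLabelling.exists_block_labels {m n s t : ℕ} {T : PP m s} {S : PP n t}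
    (hT : IsThroughLabelling T) (hS : IsThroughLabelling S) (h : PP s t) :
    ∃ (f : Fin m → Quotient h ⊕ Bool) (g : Fin n → Quotient h ⊕ Bool),
      compP (swapP S) (compP h T) ≤ Setoid.ker (Sum.elim f g) ∧
      (∀ x b, T.r (.inl x) (.inr b) → f x = .inl (Quotient.mk h (.inl b))) ∧
      ∀ x y, f x = g y → ∃ b c, T.r (.inl x) (.inr b) ∧ h.r (.inl b) (.inr c) := by
  let block (u : Fin s ⊕ Fin t) : Quotient h ⊕ Bool := .inl (Quotient.mk h u)
  -- Distinct default labels keep the unlabelled blocks of the two rows apart.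
  obtain ⟨f, hTf, hf⟩ := hT.exists_extension (fun b => block (.inl b)) (.inr true)
  obtain ⟨g, hSg, hg⟩ := hS.exists_extension (fun c => block (.inr c)) (.inr false)
  have hh : h ≤ Setoid.ker (Sum.elim (fun b => block (.inl b)) (fun c => block (.inr c))) := by
    rintro (x | x) (y | y) hxy <;> exact congrArg Sum.inl (Quotient.sound hxy)
  have f_of_rel {x b} (hxb : T.r (.inl x) (.inr b)) : f x = block (.inl b) := hTf hxb
  have g_of_rel {y c} (hyc : S.r (.inl y) (.inr c)) : g y = block (.inr c) := hSg hyc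
  refine ⟨f, g, compP_le_ker (compP_le_ker hTf hh) (swapP_le_ker hSg), fun _ _ => f_of_rel,
    fun x y hxy => ?_⟩
  by_cases hx : ∃ b, T.r (.inl x) (.inr b) <;> by_cases hy : ∃ c, S.r (.inl y) (.inr c)
  · obtain ⟨b, hb⟩ := hx
    obtain ⟨c, hc⟩ := hy
    rw [f_of_rel hb, g_of_rel hc] at hxy
    exact ⟨b, c, hb, Quotient.exact (Sum.inl_injective hxy)⟩
  · obtain ⟨b, hb⟩ := hx
    simp [f_of_rel hb, hg y (not_exists.1 hy), block] at hxy
  · obtain ⟨c, hc⟩ := hy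
    simp [hf x (not_exists.1 hx), g_of_rel hc, block] at hxy
  · simp [hf x (not_exists.1 hx), hg y (not_exists.1 hy)] at hxy

theorem IsThroughLabelling.tP_compP {m n s t : ℕ} {T : PP m s} {S : PP n t}
    (hT : IsThroughLabelling T) (hS : IsThroughLabelling S) (h : PP s t) :
    tP (compP (swapP S) (compP h T)) = tP h := by
  choose σ hσ using hT.exists_rel
  choose τ hτ using hS.exists_rel
  obtain ⟨f, g, hle, hf, hfg⟩ := hT.exists_block_labels hS h
  obtain ⟨r, hr⟩ := exists_isThroughTransversal h
  suffices IsThroughTransversal (compP (swapP S) (compP h T)) (σ ∘ r) by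
    rw [this.tP_eq_card, Nat.card_fin]
  refine ⟨fun i j hij => hr.eq_of_rel i j ?_, fun i => ?_, fun x y hxy => ?_⟩
  · have hlabel : f (σ (r i)) = f (σ (r j)) := hle hij
    rw [hf _ _ (hσ _), hf _ _ (hσ _)] at hlabel
    exact Quotient.exact (Sum.inl_injective hlabel)
  · obtain ⟨y, hy⟩ := hr.through i
    exact ⟨τ y, compP_inl_inr (compP_inl_inr (hσ _) hy) ((swapP S).symm (hτ y))⟩
  · obtain ⟨b, c, hxb, hbc⟩ := hfg x y (hle hxy)
    obtain ⟨i, hi⟩ := hr.exists_rel b c hbc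
    have hx : (compP h T).r (.inl x) (.inr c) := compP_inl_inr hxb hbc
    have hi' : (compP h T).r (.inl (σ (r i))) (.inr c) :=
      compP_inl_inr (hσ _) (h.trans (h.symm hi) hbc)
    exact ⟨i, compP_inl_inl ((compP h T).trans hx ((compP h T).symm hi'))⟩

theorem IsThroughLabelling.tP_mixP {m n s t : ℕ} {T : PP m s} {S : PP n t}
    (hT : IsThroughLabelling T) (hS : IsThroughLabelling S) (h : PP (s + t) (s + t)) :
    tP (mixP T S h) = tP h := by
  rw [mixP, tensorP_swapP]
  exact (hT.tensorP hS).tP_compP (hT.tensorP hS) h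

end ThroughBlocks

section Nested

theorem mixDepth_lt_iff {k l a : ℕ} {x : Fin (k + l)} :
    mixDepth k l x < a ↔ k ≤ x + a ∧ (x : ℕ) < k + a := by
  unfold mixDepth
  split_ifs <;> omega

theorem le_mixDepth_iff {k l a : ℕ} {x : Fin (k + l)} :
    a ≤ mixDepth k l x ↔ (x : ℕ) + a < k ∨ k + a ≤ x := by
  rw [← not_lt, mixDepth_lt_iff]
  omega

/-- In each row of `h` the points of depth less than `a` are paired with their mirror images across
the boundary, and the points of depth at least `b` lie on through-blocks. Thus `b = a` describes
`h̃^a_□`, and `b = a - 1` describes `h̃^a_⊡`. -/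
structure IsNested (k l a b : ℕ) (h : PP (k + l) (k + l)) : Prop where
  swap_eq : swapP h = h
  upper_iff : ∀ x y, h.r (.inl x) (.inl y) ↔
    x = y ∨ ((x : ℕ) + y + 1 = 2 * k ∧ mixDepth k l x < a)
  through_iff : ∀ x y, h.r (.inl x) (.inr y) ↔
    h.r (.inl x) (.inl y) ∧ b ≤ mixDepth k l x

theorem swapP_ker_of_label_swap {n : ℕ} {γ : Type*} {f : Fin n ⊕ Fin n → γ}
    (hf : ∀ u v, f u = f v → f u.swap = f v.swap) : swapP (Setoid.ker f) = Setoid.ker f := by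
  ext u v
  refine ⟨fun huv => ?_, hf u v⟩
  have := hf _ _ huv
  rwa [Sum.swap_swap, Sum.swap_swap] at this

theorem isNested_hsq (k l a : ℕ) : IsNested k l a a (hsq k l a) where
  swap_eq := by
    refine swapP_ker_of_label_swap ?_
    rintro (x | x) (y | y) <;> grind [hsqLabel]
  upper_iff x y := by
    change hsqLabel k l a _ = hsqLabel k l a _ ↔ _
    grind [hsqLabel, mixDepth]
  through_iff x y := by
    change hsqLabel k l a _ = hsqLabel k l a _ ↔ hsqLabel k l a _ = hsqLabel k l a _ ∧ _
    grind [hsqLabel]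

theorem isNested_hbox (k l b : ℕ) : IsNested k l (b + 1) b (hbox k l (b + 1)) where
  swap_eq := by
    refine swapP_ker_of_label_swap ?_
    rintro (x | x) (y | y) <;> grind [hboxLabel]
  upper_iff x y := by
    change hboxLabel k l _ _ = hboxLabel k l _ _ ↔ _
    grind [hboxLabel, mixDepth]
  through_iff x y := by
    change hboxLabel k l _ _ = hboxLabel k l _ _ ↔ hboxLabel k l _ _ = hboxLabel k l _ _ ∧ _
    grind [hboxLabel]

namespace IsNested

variable {k l a b : ℕ} {h g : PP (k + l) (k + l)}

theorem eq (hh : IsNested k l a b h) (hg : IsNested k l a b g) : h = g := by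
  refine eq_of_upper_of_through hh.swap_eq hg.swap_eq (fun x y => ?_) fun x y => ?_
  · rw [hh.upper_iff, hg.upper_iff]
  · rw [hh.through_iff, hh.upper_iff, hg.through_iff, hg.upper_iff]

theorem vertical_iff (hh : IsNested k l a b h) (x : Fin (k + l)) :
    h.r (.inl x) (.inr x) ↔ b ≤ mixDepth k l x := by
  rw [hh.through_iff]
  exact and_iff_right (h.refl _)

theorem exists_ne_iff (hh : IsNested k l a b h) (ha : a ≤ min k l) (x : Fin (k + l)) :
    (∃ y ≠ x, h.r (.inl x) (.inl y)) ↔ mixDepth k l x < a := by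
  simp only [hh.upper_iff]
  refine ⟨fun ⟨y, hne, hxy⟩ => (hxy.resolve_left hne.symm).2, fun hx => ?_⟩
  obtain ⟨hx₁, hx₂⟩ := mixDepth_lt_iff.1 hx
  refine ⟨⟨2 * k - 1 - x, by omega⟩, ?_, .inr ⟨?_, hx⟩⟩
  · simp only [ne_eq, Fin.ext_iff]
    omega
  · change (x : ℕ) + (2 * k - 1 - x) + 1 = 2 * k
    omega

theorem isNC (hh : IsNested k l a b h) (hab : a ≤ b + 1) : isNC h := by
  have lower (x y) : h.r (.inr x) (.inr y) ↔ h.r (.inl x) (.inl y) :=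
    rel_swap_iff hh.swap_eq (.inl x) (.inl y)
  have lower_upper (x y) : h.r (.inr x) (.inl y) ↔ h.r (.inl x) (.inr y) :=
    rel_swap_iff hh.swap_eq (.inl x) (.inr y)
  rintro ⟨x | x, y | y, z | z, w | w, hxy, hyz, hzw, hxz, hyw, hnot⟩ <;>
    simp only [lower, lower_upper, hh.through_iff, hh.upper_iff, mixDepth_lt_iff, le_mixDepth_iff,
      posP, Sum.elim_inl, Sum.elim_inr, Fin.ext_iff] at * <;>
    omega

theorem tP_add (hh : IsNested k l a b h) (hba : b ≤ a) (ha : a ≤ min k l) :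
    tP h + (a + b) = k + l := by
  let f : Fin (k - b) ⊕ Fin (l - a) → Fin (k + l) :=
    Sum.elim (fun i => ⟨i, by omega⟩) (fun j => ⟨k + a + j, by omega⟩)
  have hf : IsThroughTransversal h f := by
    refine ⟨?_, ?_, ?_⟩
    · rintro (i | i) (j | j) hij <;>
        simp only [f, hh.upper_iff, Fin.ext_iff, mixDepth_lt_iff, Sum.elim_inl,
          Sum.elim_inr] at hij <;>
        grind
    · intro i
      refine ⟨f i, (hh.vertical_iff _).2 (le_mixDepth_iff.2 ?_)⟩
      rcases i with i | i <;> simp only [f, Sum.elim_inl, Sum.elim_inr] <;> omega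
    · intro x y hxy
      obtain ⟨-, hx⟩ := (hh.through_iff x y).1 hxy
      simp only [le_mixDepth_iff, mixDepth_lt_iff, hh.upper_iff, Fin.ext_iff, Sum.exists, f,
        Sum.elim_inl, Sum.elim_inr] at hx ⊢
      rcases lt_or_ge (x : ℕ) k with hxk | hkx
      · exact .inl ⟨⟨x, by omega⟩, .inl rfl⟩
      rcases lt_or_ge (x : ℕ) (k + a) with hxa | hax
      · exact .inl ⟨⟨2 * k - 1 - x, by omega⟩, .inr (by simp only; omega)⟩
      · exact .inr ⟨⟨x - (k + a), by omega⟩, .inl (by simp only; omega)⟩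
  rw [hf.tP_eq_card, Nat.card_sum, Nat.card_fin, Nat.card_fin]
  omega

end IsNested

end Nested

section Mixing

/-- The prescribed forms of the blocks of a `(k,l)`-mixing partition, as sets of points. -/
inductive IsMixingBlock (k l : ℕ) (B : Set (Fin (k + l) ⊕ Fin (k + l))) : Prop
  | vertical (a : Fin (k + l)) (hB : B = {.inl a, .inr a})
  | upper (a b : Fin (k + l)) (ha : (a : ℕ) < k) (hb : k ≤ (b : ℕ)) (hB : B = {.inl a, .inl b})
  | lower (a b : Fin (k + l)) (ha : (a : ℕ) < k) (hb : k ≤ (b : ℕ)) (hB : B = {.inr a, .inr b})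
  | quadruple (a b : Fin (k + l)) (ha : (a : ℕ) < k) (hb : k ≤ (b : ℕ))
      (hB : B = {.inl a, .inr a, .inl b, .inr b})

variable {k l : ℕ} {h : PP (k + l) (k + l)}

theorem IsMixingBlock.preimage_swap {B : Set (Fin (k + l) ⊕ Fin (k + l))}
    (hB : IsMixingBlock k l B) : IsMixingBlock k l (Sum.swap ⁻¹' B) := by
  rcases hB with ⟨a, rfl⟩ | ⟨a, b, ha, hb, rfl⟩ | ⟨a, b, ha, hb, rfl⟩ | ⟨a, b, ha, hb, rfl⟩
  · exact .vertical a (by ext (v | v) <;> simp)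
  · exact .lower a b ha hb (by ext (v | v) <;> simp)
  · exact .upper a b ha hb (by ext (v | v) <;> simp)
  · exact .quadruple a b ha hb (by ext (v | v) <;> simp)

theorem blockSize_eq_ncard (u : Fin (k + l) ⊕ Fin (k + l)) :
    blockSize h u = {v | h.r u v}.ncard :=
  rfl

theorem isMixing.isMixingBlock (hm : isMixing k l h) (u : Fin (k + l) ⊕ Fin (k + l)) :
    IsMixingBlock k l {v | h.r u v} := by
  obtain ⟨-, hsize, htwo, hfour⟩ := hm
  rcases hsize u with hu | hu
  · obtain ⟨v, hv, hne⟩ : ∃ v ∈ {v | h.r u v}, v ≠ u :=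
      Set.exists_ne_of_one_lt_ncard (by rw [← blockSize_eq_ncard, hu]; decide) u
    have hblock : {v | h.r u v} = {u, v} := by
      have hsub : {u, v} ⊆ {v | h.r u v} := Set.pair_subset (h.refl u) hv
      refine (Set.eq_of_subset_of_ncard_le hsub ?_).symm
      rw [← blockSize_eq_ncard, hu, Set.ncard_pair hne.symm]
    rcases htwo u v hv hne.symm hu with ⟨a, ⟨rfl, rfl⟩ | ⟨rfl, rfl⟩⟩ |
      ⟨a, b, ha, hb, ⟨rfl, rfl⟩ | ⟨rfl, rfl⟩ | ⟨rfl, rfl⟩ | ⟨rfl, rfl⟩⟩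
    · exact .vertical a hblock
    · exact .vertical a (hblock.trans (Set.pair_comm _ _))
    · exact .upper a b ha hb hblock
    · exact .upper a b ha hb (hblock.trans (Set.pair_comm _ _))
    · exact .lower a b ha hb hblock
    · exact .lower a b ha hb (hblock.trans (Set.pair_comm _ _))
  · obtain ⟨a, b, ha, hb, hblock⟩ := hfour u hu
    exact .quadruple a b ha hb (Set.ext hblock)

theorem ncard_quadruple {n : ℕ} {a b : Fin n} (hab : a ≠ b) :
    ({.inl a, .inr a, .inl b, .inr b} : Set (Fin n ⊕ Fin n)).ncard = 4 := by
  rw [Set.ncard_eq_toFinset_card']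
  simp [hab]

theorem IsMixingBlock.pair_or_quadruple {B : Set (Fin (k + l) ⊕ Fin (k + l))}
    (hB : IsMixingBlock k l B) :
    (B.ncard = 2 ∧ ∀ u ∈ B, ∀ v ∈ B, u ≠ v →
      (∃ a, u = .inl a ∧ v = .inr a ∨ u = .inr a ∧ v = .inl a) ∨
      ∃ a b : Fin (k + l), (a : ℕ) < k ∧ k ≤ (b : ℕ) ∧
        (u = .inl a ∧ v = .inl b ∨ u = .inl b ∧ v = .inl a ∨
          u = .inr a ∧ v = .inr b ∨ u = .inr b ∧ v = .inr a)) ∨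
    (B.ncard = 4 ∧ ∃ a b : Fin (k + l), (a : ℕ) < k ∧ k ≤ (b : ℕ) ∧
      B = {.inl a, .inr a, .inl b, .inr b}) := by
  have ne_of_lt_of_le {a b : Fin (k + l)} (ha : (a : ℕ) < k) (hb : k ≤ (b : ℕ)) : a ≠ b :=
    fun hab => by omega
  rcases hB with ⟨a, rfl⟩ | ⟨a, b, ha, hb, rfl⟩ | ⟨a, b, ha, hb, rfl⟩ | ⟨a, b, ha, hb, rfl⟩
  · exact .inl ⟨Set.ncard_pair Sum.inl_ne_inr, by grind⟩
  · exact .inl ⟨Set.ncard_pair (Sum.inl_injective.ne (ne_of_lt_of_le ha hb)),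
      fun u hu v hv hne => .inr ⟨a, b, ha, hb, by grind⟩⟩
  · exact .inl ⟨Set.ncard_pair (Sum.inr_injective.ne (ne_of_lt_of_le ha hb)),
      fun u hu v hv hne => .inr ⟨a, b, ha, hb, by grind⟩⟩
  · exact .inr ⟨ncard_quadruple (ne_of_lt_of_le ha hb), a, b, ha, hb, rfl⟩

theorem isMixing_of_upper (hp : isProjective h)
    (hu : ∀ x, IsMixingBlock k l {v | h.r (.inl x) v}) : isMixing k l h := by
  have hblock (u) : IsMixingBlock k l {v | h.r u v} := by
    rcases u with x | x
    · exact hu x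
    · convert (hu x).preimage_swap using 1
      ext v
      exact (rel_swap_iff hp.1 (.inr x) v).symm
  refine ⟨hp, fun u => ?_, fun u v huv hne hsize => ?_, fun u hsize => ?_⟩ <;>
    rcases (hblock u).pair_or_quadruple with ⟨hcard, hpair⟩ | ⟨hcard, a, b, ha, hb, hB⟩
  · exact .inl hcard
  · exact .inr hcard
  · exact hpair u (h.refl u) v huv hne
  · exact absurd (hcard.symm.trans hsize) (by decide)
  · exact absurd (hcard.symm.trans hsize) (by decide)
  · exact ⟨a, b, ha, hb, Set.ext_iff.1 hB⟩

theorem isMixing.lt_iff_le (hm : isMixing k l h) {x y : Fin (k + l)}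
    (hxy : h.r (.inl x) (.inl y)) (hne : x ≠ y) : (x : ℕ) < k ↔ k ≤ (y : ℕ) := by
  have hx : Sum.inl x ∈ {v | h.r (.inl x) v} := h.refl _
  have hy : Sum.inl y ∈ {v | h.r (.inl x) v} := hxy
  rcases hm.isMixingBlock (.inl x) with ⟨a, hB⟩ | ⟨a, b, ha, hb, hB⟩ | ⟨a, b, ha, hb, hB⟩ |
    ⟨a, b, ha, hb, hB⟩ <;> rw [hB] at hx hy <;> grind

theorem isMixing.vertical_or_exists_ne (hm : isMixing k l h) (x : Fin (k + l)) :
    h.r (.inl x) (.inr x) ∨ ∃ y ≠ x, h.r (.inl x) (.inl y) := by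
  have hx : Sum.inl x ∈ {v | h.r (.inl x) v} := h.refl _
  rcases hm.isMixingBlock (.inl x) with ⟨a, hB⟩ | ⟨a, b, ha, hb, hB⟩ | ⟨a, b, ha, hb, hB⟩ |
    ⟨a, b, ha, hb, hB⟩ <;> rw [hB] at hx <;>
    simp only [Set.ext_iff, Set.mem_ofPred] at hB <;> grind

end Mixing

theorem IsNested.isMixing {k l a b : ℕ} {h : PP (k + l) (k + l)} (hh : IsNested k l a b h)
    (hba : b ≤ a) (ha : a ≤ min k l) : isMixing k l h := by
  refine isMixing_of_upper (isProjective_iff.2 ⟨hh.swap_eq, fun x y hxy => ?_⟩) fun x => ?_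
  · exact (hh.vertical_iff x).2 ((hh.through_iff x y).1 hxy).2
  rcases le_or_gt a (mixDepth k l x) with hax | hxa
  · refine .vertical x ?_
    ext (y | y) <;>
      simp only [Set.mem_ofPred_eq, Set.mem_insert_iff, Set.mem_singleton_iff, Sum.inl.injEq,
        Sum.inr.injEq, reduceCtorEq, or_false, false_or, hh.through_iff, hh.upper_iff,
        Fin.ext_iff] <;>
      omega
  obtain ⟨c, d, hc, hd, hcd, hx⟩ : ∃ c d : Fin (k + l), (c : ℕ) < k ∧ k ≤ (d : ℕ) ∧
      (c : ℕ) + d + 1 = 2 * k ∧ (x = c ∨ x = d) := by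
    obtain ⟨y, hne, hxy⟩ := (hh.exists_ne_iff ha x).2 hxa
    have hmirror := (((hh.upper_iff x y).1 hxy).resolve_left hne.symm).1
    rcases lt_or_ge (x : ℕ) k with hxk | hkx
    · exact ⟨x, y, hxk, by omega, hmirror, .inl rfl⟩
    · exact ⟨y, x, by omega, hkx, by omega, .inr rfl⟩
  have hupper (y) : h.r (.inl x) (.inl y) ↔ y = c ∨ y = d := by
    rw [hh.upper_iff]
    grind
  rcases le_or_gt b (mixDepth k l x) with hbx | hxb
  · refine .quadruple c d hc hd ?_
    ext (y | y) <;> simp [hh.through_iff, hupper, hbx]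
  · refine .upper c d hc hd ?_
    ext (y | y) <;> simp [hh.through_iff, hupper, hxb]

section Classification

variable {k l : ℕ} {h : PP (k + l) (k + l)}

theorem isMixing.eq_or_eq_or_eq (hm : isMixing k l h) {x y z : Fin (k + l)}
    (hxy : h.r (.inl x) (.inl y)) (hxz : h.r (.inl x) (.inl z)) : x = y ∨ x = z ∨ y = z := by
  by_contra! hne
  have := hm.lt_iff_le hxy hne.1
  have := hm.lt_iff_le hxz hne.2.1
  have := hm.lt_iff_le (h.trans (h.symm hxy) hxz) hne.2.2
  omega

theorem isMixing.not_vertical_of_mem_Ioo (hm : isMixing k l h) (hnc : isNC h)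
    {x y z : Fin (k + l)} (hxy : h.r (.inl x) (.inl y)) (hz : z ∈ Set.Ioo x y) :
    ¬ h.r (.inl z) (.inr z) := by
  intro hvert
  have hxz : h.r (.inl x) (.inl z) := hnc.rel (w := .inl y) hz.1 hz.2
    (by simp only [posP, Sum.elim_inl, Sum.elim_inr]; omega) hxy hvert
  grind [hm.eq_or_eq_or_eq hxy hxz]

theorem isMixing.exists_mem_Ioo (hm : isMixing k l h) (hnc : isNC h)
    {x y z : Fin (k + l)} (hxy : h.r (.inl x) (.inl y)) (hz : z ∈ Set.Ioo x y) :
    ∃ w ∈ Set.Ioo x y, w ≠ z ∧ h.r (.inl z) (.inl w) := by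
  obtain ⟨hxz, hzy⟩ := hz
  obtain ⟨w, hwz, hzw⟩ := (hm.vertical_or_exists_ne z).resolve_left
    (hm.not_vertical_of_mem_Ioo hnc hxy ⟨hxz, hzy⟩)
  have hx : ¬ h.r (.inl x) (.inl z) := fun hx => by grind [hm.eq_or_eq_or_eq hxy hx]
  refine ⟨w, ⟨?_, ?_⟩, hwz, hzw⟩ <;> by_contra! hw
  · rcases hw.eq_or_lt with rfl | hwx
    · exact hx (h.symm hzw)
    · have hw' : h.r (.inl w) (.inl x) :=
        hnc.rel (w := .inl z) (z := .inl y) hwx hxz hzy (h.symm hzw) hxy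
      exact hx (h.trans (h.symm hw') (h.symm hzw))
  · rcases hw.eq_or_lt with rfl | hyw
    · exact hx (h.trans hxy (h.symm hzw))
    · exact hx (hnc.rel (u := .inl x) (w := .inl y) (z := .inl w) hxz hzy hyw hxy hzw)

theorem isMixing.add_add_one_eq (hm : isMixing k l h) (hnc : isNC h) {x y : Fin (k + l)}
    (hxy : h.r (.inl x) (.inl y)) (hxk : (x : ℕ) < k) (hky : k ≤ (y : ℕ)) :
    (x : ℕ) + y + 1 = 2 * k := by
  have exists_opposite {z} (hz : x < z ∧ z < y) : ∃ w, (x < w ∧ w < y) ∧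
      ((z : ℕ) < k ↔ k ≤ (w : ℕ)) ∧ h.r (.inl z) (.inl w) := by
    obtain ⟨w, hw, hwz, hzw⟩ := hm.exists_mem_Ioo hnc hxy hz
    exact ⟨w, hw, hm.lt_iff_le hzw hwz.symm, hzw⟩
  have eq_of_same_side {z z' w} (hzw : h.r (.inl z) (.inl w)) (hzw' : h.r (.inl z') (.inl w))
      (hside : (z : ℕ) < k ↔ (z' : ℕ) < k) : z = z' := by
    by_contra hne
    have := hm.lt_iff_le (h.trans hzw (h.symm hzw')) hne
    omega
  let κ : Fin (k + l) := ⟨k, by omega⟩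
  have card_le {s t : Finset (Fin (k + l))} (hs : ∀ z ∈ s, x < z ∧ z < y)
      (hside : ∀ z ∈ s, ∀ z' ∈ s, (z : ℕ) < k ↔ (z' : ℕ) < k)
      (ht : ∀ z ∈ s, ∀ w, x < w ∧ w < y → ((z : ℕ) < k ↔ k ≤ (w : ℕ)) → w ∈ t) :
      s.card ≤ t.card := by
    refine Finset.card_le_card_of_forall_subsingleton (fun z w => h.r (.inl z) (.inl w))
      (fun z hz => ?_) fun w _ z hz z' hz' => eq_of_same_side hz.2 hz'.2 (hside z hz.1 z' hz'.1)
    obtain ⟨w, hw, hzw, hrel⟩ := exists_opposite (hs z hz)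
    exact ⟨w, ht z hz w hw hzw, hrel⟩
  have hleft : (Finset.Ioo x κ).card ≤ (Finset.Ico κ y).card :=
    card_le (by grind) (by grind) (by grind)
  have hright : (Finset.Ico κ y).card ≤ (Finset.Ioo x κ).card :=
    card_le (by grind) (by grind) (by grind)
  simp only [Fin.card_Ioo, Fin.card_Ico, κ] at hleft hright
  omega

theorem isMixing.exists_arc (hm : isMixing k l h) (hnc : isNC h) {x y : Fin (k + l)}
    (hxy : h.r (.inl x) (.inl y)) (hne : x ≠ y) :
    ∃ c d : Fin (k + l), (x = c ∧ y = d ∨ x = d ∧ y = c) ∧ h.r (.inl c) (.inl d) ∧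
      (c : ℕ) < k ∧ k ≤ (d : ℕ) ∧ (c : ℕ) + d + 1 = 2 * k := by
  have hside := hm.lt_iff_le hxy hne
  rcases lt_or_ge (x : ℕ) k with hxk | hkx
  · exact ⟨x, y, .inl ⟨rfl, rfl⟩, hxy, hxk, hside.1 hxk,
      hm.add_add_one_eq hnc hxy hxk (hside.1 hxk)⟩
  · exact ⟨y, x, .inr ⟨rfl, rfl⟩, h.symm hxy, by omega, hkx,
      hm.add_add_one_eq hnc (h.symm hxy) (by omega) hkx⟩

theorem isMixing.exists_ne_iff_mixDepth_lt (hm : isMixing k l h) (hnc : isNC h) :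
    ∃ a ≤ min k l, ∀ x, (∃ y ≠ x, h.r (.inl x) (.inl y)) ↔ mixDepth k l x < a := by
  refine exists_le_forall_iff_lt ?_ ?_
  · rintro x z ⟨y, hne, hxy⟩ hzx
    obtain ⟨c, d, hx, hcd, hc, hd, hmirror⟩ := hm.exists_arc hnc hxy hne.symm
    obtain hz | rfl | rfl : z ∈ Set.Ioo c d ∨ z = c ∨ z = d := by grind [mixDepth]
    · obtain ⟨w, -, hw⟩ := hm.exists_mem_Ioo hnc hcd hz
      exact ⟨w, hw⟩
    · exact ⟨d, by grind, hcd⟩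
    · exact ⟨c, by grind, h.symm hcd⟩
  · rintro x ⟨y, hne, hxy⟩
    obtain ⟨c, d, hx, -, hc, hd, hmirror⟩ := hm.exists_arc hnc hxy hne.symm
    grind [mixDepth]

theorem isMixing.not_vertical_iff_mixDepth_lt (hm : isMixing k l h) (hnc : isNC h) {a : ℕ}
    (ha : ∀ x, (∃ y ≠ x, h.r (.inl x) (.inl y)) ↔ mixDepth k l x < a) :
    ∃ b ≤ a, ∀ x, ¬ h.r (.inl x) (.inr x) ↔ mixDepth k l x < b := by
  obtain ⟨-, hvertical⟩ := isProjective_iff.1 hm.1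
  refine exists_le_forall_iff_lt (fun x z hx hzx => ?_) fun x hx => ?_
  · obtain ⟨y, hne, hxy⟩ := (hm.vertical_or_exists_ne x).resolve_left hx
    obtain ⟨c, d, hx', hcd, hc, hd, hmirror⟩ := hm.exists_arc hnc hxy hne.symm
    obtain hz | rfl | rfl : z ∈ Set.Ioo c d ∨ z = x ∨ z = y := by grind [mixDepth]
    · exact hm.not_vertical_of_mem_Ioo hnc hcd hz
    · exact hx
    · exact fun hz => hx (hvertical x z (h.trans hxy hz))
  · exact (ha x).1 ((hm.vertical_or_exists_ne x).resolve_left hx)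

theorem isMixing.exists_isNested (hm : isMixing k l h) (hnc : isNC h) :
    ∃ a b, b ≤ a ∧ a ≤ b + 1 ∧ a ≤ min k l ∧ IsNested k l a b h := by
  obtain ⟨hswap, hvertical⟩ := isProjective_iff.1 hm.1
  obtain ⟨a, ha, hpaired⟩ := hm.exists_ne_iff_mixDepth_lt hnc
  obtain ⟨b, hba, hnv⟩ := hm.not_vertical_iff_mixDepth_lt hnc hpaired
  have mirror {x y} (hxy : h.r (.inl x) (.inl y)) (hne : x ≠ y) : (x : ℕ) + y + 1 = 2 * k := by
    obtain ⟨c, d, hx, -, -, -, hmirror⟩ := hm.exists_arc hnc hxy hne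
    grind
  refine ⟨a, b, hba, ?_, ha, hswap, fun x y => ⟨fun hxy => ?_, ?_⟩, fun x y => ?_⟩
  · by_contra! hab
    let x : Fin (k + l) := ⟨k - (b + 2), by omega⟩
    let z : Fin (k + l) := ⟨k - (b + 1), by omega⟩
    obtain ⟨y, hne, hxy⟩ := (hpaired x).2 (mixDepth_lt_iff.2 (by simp only [x]; omega))
    have hxy' := mirror hxy hne.symm
    have hz : z ∈ Set.Ioo x y := by
      simp only [x, z, Set.mem_Ioo, Fin.lt_def] at hxy' ⊢
      omega
    have hzb := mixDepth_lt_iff.1 ((hnv z).1 (hm.not_vertical_of_mem_Ioo hnc hxy hz))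
    simp only [z] at hzb
    omega
  · rw [or_iff_not_imp_left]
    exact fun hne => ⟨mirror hxy hne, (hpaired x).1 ⟨y, Ne.symm hne, hxy⟩⟩
  · rintro (rfl | ⟨hsum, hx⟩)
    · exact h.refl _
    · obtain ⟨y', hne, hxy'⟩ := (hpaired x).2 hx
      have hsum' := mirror hxy' hne.symm
      rwa [show y = y' by omega]
  · rw [inl_rel_inr_iff hvertical hswap, ← not_lt, ← hnv, not_not]

end Classification

theorem isMixing_and_isNC_iff {k l : ℕ} (h : PP (k + l) (k + l)) :
    (isMixing k l h ∧ isNC h) ↔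
      (∃ a ≤ min k l, h = hsq k l a) ∨ ∃ a, 1 ≤ a ∧ a ≤ min k l ∧ h = hbox k l a := by
  constructor
  · rintro ⟨hm, hnc⟩
    obtain ⟨a, b, hba, hab, ha, hh⟩ := hm.exists_isNested hnc
    obtain rfl | rfl : a = b ∨ a = b + 1 := by omega
    · exact .inl ⟨a, ha, hh.eq (isNested_hsq k l a)⟩
    · exact .inr ⟨b + 1, by omega, ha, hh.eq (isNested_hbox k l b)⟩
  · rintro (⟨a, ha, rfl⟩ | ⟨_ | b, hb, ha, rfl⟩)
    · exact ⟨(isNested_hsq k l a).isMixing le_rfl ha, (isNested_hsq k l a).isNC a.le_succ⟩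
    · exact absurd hb (by decide)
    · exact ⟨(isNested_hbox k l b).isMixing b.le_succ ha, (isNested_hbox k l b).isNC le_rfl⟩

theorem tP_hsq {k l a : ℕ} (ha : a ≤ min k l) : tP (hsq k l a) + 2 * a = k + l := by
  rw [two_mul]
  exact (isNested_hsq k l a).tP_add le_rfl ha

theorem tP_hbox {k l a : ℕ} (ha₁ : 1 ≤ a) (ha : a ≤ min k l) :
    tP (hbox k l a) + 2 * a = k + l + 1 := by
  obtain ⟨b, rfl⟩ := Nat.exists_eq_add_of_le' ha₁
  have := (isNested_hbox k l b).tP_add b.le_succ ha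
  omega

theorem noncrossing_mixing_classification_general (k l : ℕ) :
    (∀ h : PP (k + l) (k + l), (isMixing k l h ∧ isNC h) ↔
      ((∃ a ≤ min k l, h = hsq k l a) ∨ (∃ a, 1 ≤ a ∧ a ≤ min k l ∧ h = hbox k l a))) ∧
    (∀ (m n s t : ℕ) (T : PP m s) (S : PP n t), IsThroughLabelling T → IsThroughLabelling S →
      ∀ a ≤ min s t,
        (tP (mixP T S (hsq s t a)) + 2 * a = s + t) ∧
        (1 ≤ a → tP (mixP T S (hbox s t a)) + 2 * a = s + t + 1)) := by
  refine ⟨isMixing_and_isNC_iff, fun m n s t T S hT hS a ha => ?_⟩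
  rw [hT.tP_mixP hS, hT.tP_mixP hS]
  exact ⟨tP_hsq ha, fun ha₁ => tP_hbox ha₁ ha⟩

/-- the only noncrossing `(k,l)`-mixing partitions are `h̃^a_□`
(`0 ≤ a ≤ min(k,l)`) and `h̃^a_⊡` (`1 ≤ a ≤ min(k,l)`); consequently
`t(p □^a q) + 2a = t(p) + t(q)` and `t(p ⊡^a q) + 2a = t(p) + t(q) + 1`. -/
theorem noncrossing_mixing_classification (k l : ℕ) :
    (∀ h : PP (k + l) (k + l), (isMixing k l h ∧ isNC h) ↔
      ((∃ a ≤ min k l, h = hsq k l a) ∨ (∃ a, 1 ≤ a ∧ a ≤ min k l ∧ h = hbox k l a))) ∧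
    (∀ (m n : ℕ) (p : PP m m) (q : PP n n), isProjective p → isProjective q →
      ∀ (pu : PP m (tP p)) (qu : PP n (tP q)),
        isBuilding pu → p = compP (swapP pu) pu →
        isBuilding qu → q = compP (swapP qu) qu →
      ∀ a ≤ min (tP p) (tP q),
        (tP (mixP pu qu (hsq (tP p) (tP q) a)) + 2 * a = tP p + tP q) ∧
        (1 ≤ a → tP (mixP pu qu (hbox (tP p) (tP q) a)) + 2 * a = tP p + tP q + 1)) :=
  ⟨(noncrossing_mixing_classification_general k l).1, fun m n _ _ _ _ pu qu hpu _ hqu _ =>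
    (noncrossing_mixing_classification_general k l).2 m n _ _ pu qu
      (isThroughLabelling_of_isBuilding hpu) (isThroughLabelling_of_isBuilding hqu)⟩
end
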